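/- arXiv:1607.00062 — 4 statements merged into one kernel-verified Lean document; each statement's English description precedes it below -/
import Mathlib

section
/- Let A be a commutative ring, let R be an A-algebra, and let I ⊆ R be an ideal. Let M be an R-module such that for every t ≥ 1 the quotient M/I^t M is a finitely generated free A-module. Then Hom_A^cts(M, A) is a free A-module. -/
/-- The relative Matlis dual / continuous dual: the `A`-submodule of `Hom_A(M, A)` consisting of
the `A`-linear maps `φ : M → A` such that `φ(IᵗM) = 0` for some `t`. -/
def ContinuousDual (A : Type*) [CommRing A] (R : Type*) [CommRing R] [Algebra A R]
    (I : Ideal R) (M : Type*) [AddCommGroup M] [Module A M] [Module R M] :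
    Submodule A (M →ₗ[A] A) where
  carrier := {φ | ∃ t : ℕ, ∀ r ∈ I ^ t, ∀ m : M, φ (r • m) = 0}
  add_mem' := by
    rintro φ ψ ⟨t, ht⟩ ⟨s, hs⟩
    exact ⟨t + s, fun r hr m => by
      have h1 := ht r (Ideal.pow_le_pow_right (Nat.le_add_right t s) hr) m
      have h2 := hs r (Ideal.pow_le_pow_right (Nat.le_add_left s t) hr) m
      simp [h1, h2]⟩
  zero_mem' := ⟨0, fun r _ m => rfl⟩
  smul_mem' := by
    rintro a φ ⟨t, ht⟩
    exact ⟨t, fun r hr m => by simp [ht r hr m]⟩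

theorem mat_retract {A X Y : Type*} [CommRing A] [AddCommGroup X] [Module A X] [AddCommGroup Y]
    [Module A Y] (i : X →ₗ[A] Y) (p : Y →ₗ[A] X) (h : ∀ x, p (i x) = x) :
    Nonempty (Y ≃ₗ[A] X × LinearMap.ker p) := by
  refine ⟨LinearEquiv.ofLinearMap
    (p.prod ((LinearMap.id - i ∘ₗ p).codRestrict (LinearMap.ker p) (by simp [h])))
    (i.coprod (LinearMap.ker p).subtype) ?_ ?_⟩
  · apply LinearMap.ext
    rintro ⟨x, y, hy⟩
    have hy' : p y = 0 := hy
    refine Prod.ext ?_ (Subtype.ext ?_) <;> simp [h, hy']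
  · ext y
    simp

theorem mat_finsupp_prod {A X Y : Type*} [CommRing A] [AddCommGroup X] [Module A X]
    [AddCommGroup Y] [Module A Y] :
    Nonempty ((ℕ →₀ (X × Y)) ≃ₗ[A] (ℕ →₀ X) × (ℕ →₀ Y)) := by
  refine ⟨LinearEquiv.ofLinearMap
    ((Finsupp.mapRange.linearMap (LinearMap.fst A X Y)).prod
      (Finsupp.mapRange.linearMap (LinearMap.snd A X Y)))
    ((Finsupp.mapRange.linearMap (LinearMap.inl A X Y)).coprod
      (Finsupp.mapRange.linearMap (LinearMap.inr A X Y))) ?_ ?_⟩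
  · apply LinearMap.ext
    rintro ⟨x, y⟩
    refine Prod.ext (Finsupp.ext fun n => ?_) (Finsupp.ext fun n => ?_) <;> simp
  · apply LinearMap.ext
    intro x
    refine Finsupp.ext fun n => ?_
    simp

theorem mat_swindle {A D ι : Type*} [CommRing A] [AddCommGroup D] [Module A D] [Countable ι]
    (i : D →ₗ[A] (ι →₀ A)) (p : (ι →₀ A) →ₗ[A] D) (h : ∀ x, p (i x) = x)
    (f : D →ₗ[A] (ℕ →₀ A)) (hf : Function.Surjective f) : Module.Free A D := by
  obtain ⟨g, hg⟩ := exists_injective_nat (ℕ × ι)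
  have hs : Function.Surjective
      (Finsupp.lcomapDomain g hg : (ℕ →₀ A) →ₗ[A] (ℕ × ι →₀ A)) := by
    intro y
    refine ⟨Finsupp.mapDomain g y, ?_⟩
    exact Finsupp.comapDomain_mapDomain g hg y
  let F' : D →ₗ[A] (ℕ →₀ (ι →₀ A)) :=
    (Finsupp.curryLinearEquiv A).toLinearMap ∘ₗ (Finsupp.lcomapDomain g hg) ∘ₗ f
  have hF' : Function.Surjective F' :=
    (Finsupp.curryLinearEquiv A).surjective.comp (hs.comp hf)
  obtain ⟨j, hj⟩ := Module.projective_lifting_property F' LinearMap.id hF'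
  have hj' : ∀ x, F' (j x) = x := fun x => LinearMap.congr_fun hj x
  obtain ⟨e1⟩ := mat_retract (X := ℕ →₀ (ι →₀ A)) (Y := D) j F' hj'
  let q : D →ₗ[A] LinearMap.ker F' := LinearMap.snd A _ _ ∘ₗ e1.toLinearMap
  let k : LinearMap.ker F' →ₗ[A] D := e1.symm.toLinearMap ∘ₗ LinearMap.inr A _ _
  have hqk : ∀ x, (q ∘ₗ p) ((i ∘ₗ k) x) = x := by
    intro x; simp [q, k, h]
  obtain ⟨e2⟩ := mat_retract (i ∘ₗ k) (q ∘ₗ p) hqk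
  obtain ⟨e3⟩ := mat_finsupp_prod (A := A) (X := LinearMap.ker F') (Y := LinearMap.ker (q ∘ₗ p))
  let Q := LinearMap.ker F'
  let e4 : ((ℕ →₀ Q) × Q) ≃ₗ[A] (ℕ →₀ Q) :=
    ((LinearEquiv.refl A _).prodCongr
      (Finsupp.uniqueLinearEquiv A Q (() : Unit)).symm).trans
      ((Finsupp.sumFinsuppLEquivProdFinsupp A).symm.trans
        (Finsupp.domLCongr (Equiv.natSumPUnitEquivNat)))
  let e5 : (ℕ →₀ (ι →₀ A)) ≃ₗ[A] _ := (Finsupp.mapRange.linearEquiv e2).trans e3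
  let e6 : D ≃ₗ[A] (ℕ →₀ (ι →₀ A)) :=
    e1.trans <| (e5.prodCongr (LinearEquiv.refl A Q)).trans <|
      ((LinearEquiv.prodComm A _ _).prodCongr (LinearEquiv.refl A Q)).trans <|
      (LinearEquiv.prodAssoc A _ _ _).trans <|
      ((LinearEquiv.refl A _).prodCongr e4).trans <|
      (LinearEquiv.prodComm A _ _).trans e5.symm
  exact Module.Free.of_equiv e6.symm

/-- Continuous dual of a filtered module. -/
def matDual {A M : Type*} [CommRing A] [AddCommGroup M] [Module A M] (F : ℕ → Submodule A M)
    (hF : Antitone F) : Submodule A (M →ₗ[A] A) where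
  carrier := {φ | ∃ t : ℕ, ∀ m ∈ F t, φ m = 0}
  add_mem' := by
    rintro φ ψ ⟨t, ht⟩ ⟨s, hs⟩
    exact ⟨t + s, fun m hm => by
      simp [ht m (hF (Nat.le_add_right t s) hm), hs m (hF (Nat.le_add_left s t) hm)]⟩
  zero_mem' := ⟨0, fun m _ => rfl⟩
  smul_mem' := by
    rintro a φ ⟨t, ht⟩
    exact ⟨t, fun m hm => by simp [ht m hm]⟩

section
variable {A M : Type*} [CommRing A] [AddCommGroup M] [Module A M] (F : ℕ → Submodule A M)
    (hF : Antitone F)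

theorem mat_eval {ι : Type*} (w : ι → M) (hw : ∀ t, {i | w i ∉ F t}.Finite) :
    ∃ f : matDual F hF →ₗ[A] (ι →₀ A), ∀ φ i, f φ i = φ.1 (w i) := by
  have key : ∀ φ : matDual F hF, (Function.support fun i => φ.1 (w i)).Finite := by
    rintro ⟨φ, t, ht⟩
    refine (hw t).subset ?_
    intro i hi hi'
    exact hi (ht _ hi')
  exact ⟨{ toFun := fun φ => Finsupp.ofSupportFinite _ (key φ)
           map_add' := fun a b => by ext i; rfl
           map_smul' := fun a b => by ext i; rfl }, fun φ i => rfl⟩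

variable (r : ℕ → ℕ) (c : ∀ t, M →ₗ[A] (Fin (r t) → A)) (s : ∀ t, (Fin (r t) → A) →ₗ[A] M)
    (hcs : ∀ t x, c t (s t x) = x) (hker : ∀ t m, c t m = 0 ↔ m ∈ F t)

include hcs hker in
theorem mat_sub (t : ℕ) (m : M) : m - s t (c t m) ∈ F t := by
  rw [← hker]; simp [hcs]

include hcs hker in
theorem mat_proj (hF0 : F 0 = ⊤) :
    ∃ (i : matDual F hF →ₗ[A] ((Σ t, Fin (r (t + 1))) →₀ A))
      (p : ((Σ t, Fin (r (t + 1))) →₀ A) →ₗ[A] matDual F hF), ∀ x, p (i x) = x := by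
  let w : (Σ t, Fin (r (t + 1))) → M := fun x =>
    s (x.1 + 1) (Pi.single x.2 1) - s x.1 (c x.1 (s (x.1 + 1) (Pi.single x.2 1)))
  have hw1 : ∀ x, w x ∈ F x.1 := fun x => mat_sub F r c s hcs hker _ _
  have hw : ∀ t, {i | w i ∉ F t} ⊆
      ((Finset.range t).sigma fun _ => Finset.univ : Finset (Σ t, Fin (r (t + 1)))) := by
    intro t x hx
    simp only [Finset.coe_sigma, Set.mem_sigma_iff, Finset.coe_range, Set.mem_Iio]
    refine ⟨?_, by simp⟩
    by_contra hlt
    exact hx (hF (not_lt.mp hlt) (hw1 x))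
  obtain ⟨f, hf⟩ := mat_eval F hF w (fun t => (Finset.finite_toSet _).subset (hw t))
  let b : (Σ t, Fin (r (t + 1))) → matDual F hF := fun x =>
    ⟨LinearMap.proj x.2 ∘ₗ c (x.1 + 1), x.1 + 1, fun m hm => by
      simp [(hker _ _).2 hm]⟩
  refine ⟨f, Finsupp.linearCombination A b, ?_⟩
  rintro ⟨φ, u, hu⟩
  ext m
  have hsup : (f ⟨φ, u, hu⟩).support ⊆ (Finset.range u).sigma fun _ => Finset.univ := by
    intro x hx
    have := @hw u x (by
      intro h
      rw [Finsupp.mem_support_iff, hf] at hx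
      exact hx (hu _ h))
    exact_mod_cast this
  rw [Finsupp.linearCombination_apply, Finsupp.sum_of_support_subset _ hsup _ (by simp),
    Finset.sum_sigma]
  have hφ : ∀ t m, t = u → φ (s t (c t m)) = φ m := by
    rintro t m rfl
    have := hu _ (mat_sub F r c s hcs hker t m)
    rw [map_sub, sub_eq_zero] at this
    exact this.symm
  have hstep : ∀ t, ∑ x : Fin (r (t + 1)), (f ⟨φ, u, hu⟩ ⟨t, x⟩) * c (t + 1) m x
      = φ (s (t + 1) (c (t + 1) m)) - φ (s t (c t m)) := by
    intro t
    have h1 : c t (s (t + 1) (c (t + 1) m)) = c t m := by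
      have := (hker t _).2 (hF (Nat.le_succ t) (mat_sub F r c s hcs hker (t + 1) m))
      rw [map_sub, sub_eq_zero] at this
      exact this.symm
    let L : (Fin (r (t + 1)) → A) →ₗ[A] A :=
      φ ∘ₗ (s (t + 1) - s t ∘ₗ c t ∘ₗ s (t + 1))
    have h2 : φ (s (t + 1) (c (t + 1) m)) - φ (s t (c t m)) = L (c (t + 1) m) := by
      simp [L, h1]
    rw [h2, LinearMap.pi_apply_eq_sum_univ L (c (t + 1) m)]
    refine Finset.sum_congr rfl fun x _ => ?_
    rw [hf, smul_eq_mul, mul_comm]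
    congr 1
    have : (fun j => if x = j then (1 : A) else 0) = Pi.single x 1 := by
      ext j; simp [Pi.single_apply, eq_comm]
    rw [this]
    simp [L, w]
  have h0 : φ (s 0 (c 0 m)) = 0 := by
    rw [(hker 0 m).2 (by simp [hF0])]; simp
  calc _ = ∑ t ∈ Finset.range u, ∑ x : Fin (r (t + 1)), (f ⟨φ, u, hu⟩ ⟨t, x⟩) * c (t + 1) m x := by
        simp [b]
    _ = φ m := by
        rw [Finset.sum_congr rfl (fun t _ => hstep t),
          Finset.sum_range_sub (fun t => φ (s t (c t m))), h0, hφ u m rfl, sub_zero]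

theorem mat_surj (hU : ∀ t, ∃ u, t ≤ u ∧ ∃ φ : M →ₗ[A] A, (∀ m ∈ F u, φ m = 0) ∧ ∃ m ∈ F t, φ m = 1) :
    ∃ f : matDual F hF →ₗ[A] (ℕ →₀ A), Function.Surjective f := by
  choose nx hle φ hφ m hm h1 using hU
  let S : ℕ → ℕ := fun k => Nat.rec 0 (fun _ t => nx t + 1) k
  have hS : ∀ k, S (k + 1) = nx (S k) + 1 := fun k => rfl
  have hmono : StrictMono S := strictMono_nat_of_lt_succ fun k => by
    rw [hS]; have := hle (S k); omega
  obtain ⟨f, hf⟩ := mat_eval F hF (fun k => m (S k)) (by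
    intro t
    refine (Set.finite_Iio t).subset ?_
    intro k hk
    by_contra hlt
    refine hk (hF ?_ (hm (S k)))
    exact (not_lt.mp hlt).trans (hmono.id_le k))
  refine ⟨f, ?_⟩
  rw [← LinearMap.range_eq_top, eq_top_iff, ← Finsupp.iSup_lsingle_range (R := A), iSup_le_iff]
  intro k
  rw [LinearMap.range_le_iff_comap, eq_top_iff]
  induction k using Nat.strong_induction_on with
  | _ k ih =>
  have hd : ∀ x : ℕ →₀ A, (∀ i, k ≤ i → x i = 0) → x ∈ LinearMap.range f := by
    intro x hx
    rw [← x.sum_single]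
    refine Submodule.sum_mem _ fun i hi => ?_
    by_cases hik : i < k
    · exact ih i hik (Submodule.mem_top (x := x i))
    · exact absurd (hx i (not_lt.mp hik)) (Finsupp.mem_support_iff.mp hi)
  intro a _
  let Φ : matDual F hF := ⟨φ (S k), nx (S k), hφ (S k)⟩
  have h2 : Finsupp.single k 1 - f Φ ∈ LinearMap.range f := by
    apply hd
    intro i hi
    rcases hi.eq_or_lt with rfl | hi
    · simp [hf, Φ, h1]
    · have : φ (S k) (m (S i)) = 0 := by
        refine hφ _ _ (hF ?_ (hm (S i)))
        have := hmono.monotone (Nat.succ_le_of_lt hi)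
        have h3 := hS k
        simp only [Nat.succ_eq_add_one] at this
        omega
      simp [hf, Φ, this, hi.ne]
  have h3 : Finsupp.single k (1 : A) ∈ LinearMap.range f := by
    have := Submodule.add_mem _ h2 (LinearMap.mem_range_self f Φ)
    simpa using this
  have := Submodule.smul_mem _ a h3
  simpa using this

include hcs hker in
theorem mat_combine (hF0 : Antitone F) (N : ℕ) : ∀ (t : ℕ) (ψ : ℕ → M →ₗ[A] A) (u : ℕ → M),
    (∀ q < N, ∀ m ∈ F (t + q + 1), ψ q m = 0) → (∀ q < N, u q ∈ F (t + q)) →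
    ∃ Φ : M →ₗ[A] A, (∀ m ∈ F (t + N), Φ m = 0) ∧ (∀ m, ∃ m' ∈ F t, Φ m' = Φ m) ∧
      ∃ m ∈ F t, Φ m = ∑ q ∈ Finset.range N, ψ q (u q) := by
  induction N with
  | zero => 
    intro t ψ u _ _
    exact ⟨0, by simp, fun m => ⟨0, by simp, by simp⟩, 0, by simp, by simp⟩
  | succ N ih =>
    intro t ψ u hψ hu
    obtain ⟨Φ', k1, k2, m', hm', k3⟩ := ih (t + 1) (fun q => ψ (q + 1)) (fun q => u (q + 1))
      (fun q hq m hm => hψ (q + 1) (by omega) m (by convert hm using 2; omega))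
      (fun q hq => by
        have := hu (q + 1) (by omega)
        convert this using 2; omega)
    have hz : ∀ m ∈ F t, ((ψ 0 + Φ') ∘ₗ (LinearMap.id - s t ∘ₗ c t)) m = ψ 0 m + Φ' m := by
      intro m hm
      simp [(hker t m).2 hm]
    have hψ0 : ∀ m ∈ F (t + 1), ψ 0 m = 0 := fun m hm => hψ 0 (by omega) m hm
    have hst : F (t + 1) ≤ F t := hF0 (Nat.le_succ t)
    refine ⟨(ψ 0 + Φ') ∘ₗ (LinearMap.id - s t ∘ₗ c t), ?_, ?_, ?_⟩
    · intro m hm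
      rw [hz m (hF0 (by omega) hm), hψ0 m (hF0 (by omega) hm),
        k1 m (by convert hm using 2; omega), add_zero]
    · intro m
      refine ⟨m - s t (c t m), mat_sub F r c s hcs hker t m, ?_⟩
      simp [hcs]
    · obtain ⟨m'', h4, h5⟩ := k2 (u 0)
      have hu0 : u 0 ∈ F t := hu 0 (by omega)
      refine ⟨u 0 - m'' + m', ?_, ?_⟩
      · exact add_mem (sub_mem hu0 (hst h4)) (hst hm')
      · rw [hz _ (add_mem (sub_mem hu0 (hst h4)) (hst hm')), Finset.sum_range_succ', ← k3]
        simp only [map_add, map_sub, h5, hψ0 _ h4, hψ0 _ hm']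
        ring

include hcs hker in
theorem mat_rank (hF0 : Antitone F) (a : Ideal A) (ha : a ≠ ⊤) (t : ℕ)
    (h : F t ≤ a • ⊤ ⊔ F (t + 1)) : F t = F (t + 1) := by
  have hnt : Nontrivial (A ⧸ a) := Ideal.Quotient.nontrivial_iff.mpr ha
  have hntA : Nontrivial A := (Ideal.Quotient.mk a).domain_nontrivial
  have hst : F (t + 1) ≤ F t := hF0 (Nat.le_succ t)
  have hsm : ∀ m ∈ (a • ⊤ : Submodule A M), ∀ i, c (t + 1) m i ∈ a := by
    intro m hm
    refine Submodule.smul_induction_on hm ?_ ?_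
    · intro x hx n _ i
      simpa using a.mul_mem_right _ hx
    · intro x y hx hy i
      simpa using a.add_mem (hx i) (hy i)
  have h1 : r (t + 1) ≤ r t := by
    let G := LinearMap.toMatrix' (c (t + 1) ∘ₗ s t)
    refine le_of_fin_surjective (A ⧸ a) (Matrix.toLin' (G.map (Ideal.Quotient.mk a))) ?_
    intro y
    choose y0 hy0 using fun i => Ideal.Quotient.mk_surjective (y i)
    refine ⟨Ideal.Quotient.mk a ∘ c t (s (t + 1) y0), ?_⟩
    ext i
    rw [Matrix.toLin'_apply, ← RingHom.map_mulVec, ← Matrix.toLin'_apply, Matrix.toLin'_toMatrix',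
      ← hy0, Ideal.Quotient.eq]
    obtain ⟨x, hx, z, hz, hxz⟩ := Submodule.mem_sup.mp
      (h (mat_sub F r c s hcs hker t (s (t + 1) y0)))
    have e1 := congrArg (c (t + 1)) hxz
    rw [map_add, (hker _ z).2 hz, add_zero, map_sub, hcs] at e1
    have e2 := hsm x hx i
    rw [e1] at e2
    have := a.neg_mem e2
    simpa using this
  have hc : ∀ m, c t (s (t + 1) (c (t + 1) m)) = c t m := by
    intro m
    have := (hker t _).2 (hst (mat_sub F r c s hcs hker (t + 1) m))
    rw [map_sub, sub_eq_zero] at this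
    exact this.symm
  have hsurj : Function.Surjective (c t ∘ₗ s (t + 1)) := by
    intro y
    exact ⟨c (t + 1) (s t y), by simp [hc, hcs]⟩
  have h2 : r t = r (t + 1) := le_antisymm (le_of_fin_surjective A _ hsurj) h1
  have hinj : Function.Injective (c t ∘ₗ s (t + 1)) := by
    let e : (Fin (r t) → A) ≃ₗ[A] (Fin (r (t + 1)) → A) :=
      LinearEquiv.funCongrLeft A A (finCongr h2.symm)
    have := OrzechProperty.injective_of_surjective_endomorphism
      (e.toLinearMap ∘ₗ (c t ∘ₗ s (t + 1))) (e.surjective.comp hsurj)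
    exact Function.Injective.of_comp (f := e) this
  refine le_antisymm ?_ hst
  intro m hm
  rw [← hker]
  apply hinj
  simp [hc, (hker t m).2 hm]
end

theorem mat_fin_gen {R M : Type*} [CommRing R] [AddCommGroup M] [Module R M] (I : Ideal R)
    (g : M) (hg : g ∈ (I • ⊤ : Submodule R M)) :
    ∃ X : Finset R, (∀ x ∈ X, x ∈ I) ∧ g ∈ (Ideal.span (X : Set R) • ⊤ : Submodule R M) := by
  classical
  refine Submodule.smul_induction_on hg ?_ ?_
  · intro x hx n _
    refine ⟨{x}, by simpa using hx, ?_⟩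
    exact Submodule.smul_mem_smul (Ideal.subset_span (by simp)) Submodule.mem_top
  · rintro g h ⟨X, h1, h2⟩ ⟨Y, h3, h4⟩
    refine ⟨X ∪ Y, ?_, add_mem ?_ ?_⟩
    · intro x hx
      rcases Finset.mem_union.mp hx with hx | hx
      exacts [h1 x hx, h3 x hx]
    · exact Submodule.smul_mono_left (Ideal.span_mono (by simp)) h2
    · exact Submodule.smul_mono_left (Ideal.span_mono (by simp)) h4

theorem mat_pow_sup {R M : Type*} [CommRing R] [AddCommGroup M] [Module R M] (I J : Ideal R)
    (hJI : J ≤ I) (h : (I • ⊤ : Submodule R M) ≤ J • ⊤ ⊔ I ^ 2 • ⊤) (t : ℕ) :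
    (I ^ t • ⊤ : Submodule R M) ≤ J ^ t • ⊤ ⊔ I ^ (t + 1) • ⊤ := by
  induction t with
  | zero => simp
  | succ t ih =>
    calc (I ^ (t + 1) • ⊤ : Submodule R M) = I • (I ^ t • ⊤ : Submodule R M) := by
          rw [← mul_smul, pow_succ']
      _ ≤ I • (J ^ t • ⊤ ⊔ I ^ (t + 1) • ⊤) := Submodule.smul_mono le_rfl ih
      _ = J ^ t • (I • ⊤ : Submodule R M) ⊔ I ^ (t + 1 + 1) • ⊤ := by
          rw [Submodule.smul_sup, ← mul_smul, ← mul_smul, ← mul_smul, mul_comm I, pow_succ' I (t + 1)]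
      _ ≤ J ^ t • (J • ⊤ ⊔ I ^ 2 • ⊤ : Submodule R M) ⊔ I ^ (t + 1 + 1) • ⊤ :=
          sup_le_sup_right (Submodule.smul_mono le_rfl h) _
      _ ≤ _ := by
          rw [Submodule.smul_sup, ← mul_smul, ← mul_smul, ← pow_succ]
          refine sup_le (sup_le le_sup_left (le_trans ?_ le_sup_right)) le_sup_right
          refine Submodule.smul_mono_left ?_
          calc J ^ t * I ^ 2 ≤ I ^ t * I ^ 2 := Ideal.mul_mono_left (Ideal.pow_right_mono hJI t)
            _ = _ := by rw [← pow_add]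

open scoped Pointwise in
theorem mat_pigeon {R : Type*} [CommRing R] (I : Ideal R) (X : Finset R) (hX : ∀ x ∈ X, x ∈ I)
    (n : ℕ) (p : R) (hp : p ∈ (X : Set R) ^ (X.card * n + 1)) :
    ∃ x ∈ X, ∃ d, ∃ y ∈ I ^ d, d + n = X.card * n + 1 ∧ p = y * x ^ n := by
  classical
  obtain ⟨f, rfl⟩ := Set.mem_pow.mp hp
  obtain ⟨x, hx, hcard⟩ := Finset.exists_lt_card_fiber_of_mul_lt_card_of_maps_to
    (s := Finset.univ) (t := X) (f := fun i => (f i : R)) (n := n)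
    (fun i _ => (f i).2) (by simp)
  obtain ⟨S, hS, hSn⟩ := Finset.exists_subset_card_eq hcard.le
  have hSx : ∀ i ∈ S, (f i : R) = x := fun i hi => (Finset.mem_filter.mp (hS hi)).2
  refine ⟨x, hx, Sᶜ.card, ∏ i ∈ Sᶜ, (f i : R), ?_, ?_, ?_⟩
  · rw [← Finset.prod_const]
    exact Ideal.prod_mem_prod fun i _ => hX _ (f i).2
  · have := Finset.card_compl_add_card S
    simpa [hSn] using this
  · rw [List.prod_ofFn, ← Finset.prod_compl_mul_prod S, Finset.prod_congr rfl hSx,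
      Finset.prod_const, hSn]

section
variable {A R M : Type*} [CommRing A] [CommRing R] [Algebra A R] [AddCommGroup M] [Module A M]
  [Module R M] [IsScalarTower A R M] (I : Ideal R)
  (F : ℕ → Submodule A M) (hFI : ∀ t, F t = (I ^ t • ⊤ : Submodule R M).restrictScalars A)
  (r : ℕ → ℕ) (c : ∀ t, M →ₗ[A] (Fin (r t) → A)) (s : ∀ t, (Fin (r t) → A) →ₗ[A] M)
  (hcs : ∀ t x, c t (s t x) = x) (hker : ∀ t m, c t m = 0 ↔ m ∈ F t)

theorem mat_expand {A M : Type*} [CommRing A] [AddCommGroup M] [Module A M] {k : ℕ}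
    (s : (Fin k → A) →ₗ[A] M) (v : Fin k → A) :
    s v = ∑ i, v i • s (Pi.single i 1) := by
  rw [LinearMap.pi_apply_eq_sum_univ s v]
  refine Finset.sum_congr rfl fun x _ => ?_
  congr 2
  ext j; simp [Pi.single_apply, eq_comm]

include hFI in
theorem mat_smul_mem (a : Ideal A) (d n : ℕ) (y : R) (hy : y ∈ I ^ d) (z : M)
    (hz : z ∈ (a • ⊤ : Submodule A M) ⊔ F n) : y • z ∈ (a • ⊤ : Submodule A M) ⊔ F (d + n) := by
  obtain ⟨u, hu, v, hv, rfl⟩ := Submodule.mem_sup.mp hz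
  rw [smul_add]
  refine Submodule.add_mem_sup ?_ ?_
  · refine Submodule.smul_induction_on hu ?_ ?_
    · intro b hb m _
      rw [smul_comm]
      exact Submodule.smul_mem_smul hb Submodule.mem_top
    · intro m m' h h'
      rw [smul_add]; exact add_mem h h'
  · rw [hFI] at hv ⊢
    rw [Submodule.restrictScalars_mem] at hv ⊢
    rw [pow_add, mul_smul]
    exact Submodule.smul_mem_smul hy hv

open scoped Pointwise in
include hFI hcs hker in
theorem mat_key (hF : Antitone F) (hne : ∀ t, F t ≠ F (t + 1)) :
    ∃ (N : ℕ) (x : ℕ → R) (e : ℕ → M), (∀ q, x q ∈ I) ∧ ∀ n, ∃ φ : ℕ → M →ₗ[A] A,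
      (∀ q, ∀ m ∈ F (n + 1), φ q m = 0) ∧
      ∑ q ∈ Finset.range N, φ q (x q ^ n • e q) = 1 := by
  classical
  let P : M →ₗ[A] M := LinearMap.id - s 1 ∘ₗ c 1
  have hP : ∀ m, P m = m - s 1 (c 1 m) := fun m => rfl
  have hPF : ∀ m, P m ∈ F 1 := fun m => mat_sub F r c s hcs hker 1 m
  have hPid : ∀ m ∈ F 1, P m = m := fun m hm => by rw [hP, (hker 1 m).2 hm]; simp
  have hF1 : ∀ m, m ∈ F 1 ↔ m ∈ (I • ⊤ : Submodule R M) := by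
    intro m; rw [hFI, pow_one]; rfl
  have hg : ∀ i : Fin (r 2), P (s 2 (Pi.single i 1)) ∈ (I • ⊤ : Submodule R M) := fun i =>
    (hF1 _).1 (hPF _)
  choose X' hX'1 hX'2 using fun i => mat_fin_gen I _ (hg i)
  let X : Finset R := Finset.univ.biUnion X'
  have hX : ∀ x ∈ X, x ∈ I := by
    intro x hx
    obtain ⟨i, _, hi⟩ := Finset.mem_biUnion.mp hx
    exact hX'1 i x hi
  let J : Ideal R := Ideal.span (X : Set R)
  have hJI : J ≤ I := Ideal.span_le.mpr hX
  have hJ : (I • ⊤ : Submodule R M) ≤ J • ⊤ ⊔ I ^ 2 • ⊤ := by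
    intro m hm
    have hm1 := (hF1 m).2 hm
    have h2 : m - s 2 (c 2 m) ∈ F 2 := mat_sub F r c s hcs hker 2 m
    have h3 : m = P (s 2 (c 2 m)) + (m - s 2 (c 2 m)) := by
      rw [← hPid _ (hF (by norm_num : 1 ≤ 2) h2), ← map_add, add_sub_cancel, hPid m hm1]
    rw [h3]
    refine Submodule.add_mem_sup ?_ ?_
    · rw [mat_expand, map_sum]
      refine Submodule.sum_mem _ fun i _ => ?_
      rw [map_smul]
      refine Submodule.smul_of_tower_mem _ _ ?_
      refine Submodule.smul_mono_left (Ideal.span_mono ?_) (hX'2 i)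
      exact_mod_cast Finset.subset_biUnion_of_mem X' (Finset.mem_univ i)
    · rw [hFI] at h2; exact h2
  let κ := X × Fin (r 1)
  have main : ∀ n, ∃ φ : κ → M →ₗ[A] A, (∀ q, ∀ m ∈ F (n + 1), φ q m = 0) ∧
      ∑ q, φ q ((q.1 : R) ^ n • s 1 (Pi.single q.2 1)) = 1 := by
    intro n
    let K : Submodule A (M →ₗ[A] A) :=
      { carrier := {φ | ∀ m ∈ F (n + 1), φ m = 0}
        add_mem' := fun {f g} hf hg m hm => by simp [hf m hm, hg m hm]
        zero_mem' := fun m _ => rfl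
        smul_mem' := fun b f hf m hm => by simp [hf m hm] }
    let v : κ → M := fun q => (q.1 : R) ^ n • s 1 (Pi.single q.2 1)
    let L : (κ → K) →ₗ[A] A :=
      ∑ q, (LinearMap.applyₗ (v q)) ∘ₗ K.subtype ∘ₗ LinearMap.proj q
    have hL : ∀ f, L f = ∑ q, (f q).1 (v q) := by
      intro f; simp [L]
    let a : Ideal A := LinearMap.range L
    by_cases ha : a = ⊤
    · have h1 : (1 : A) ∈ a := by rw [ha]; trivial
      obtain ⟨f, hf⟩ := h1
      exact ⟨fun q => (f q).1, fun q => (f q).2, by rw [hL] at hf; exact hf⟩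
    exfalso
    have ha1 : ∀ q, ∀ φ ∈ K, φ (v q) ∈ a := by
      intro q φ hφ
      refine ⟨Pi.single q ⟨φ, hφ⟩, ?_⟩
      rw [hL, Finset.sum_eq_single q]
      · simp
      · intro b _ hb
        simp [Pi.single_eq_of_ne hb]
      · simp
    have hv : ∀ q, v q ∈ (a • ⊤ : Submodule A M) ⊔ F (n + 1) := by
      intro q
      rw [← add_sub_cancel (s (n + 1) (c (n + 1) (v q))) (v q)]
      refine Submodule.add_mem_sup ?_ (mat_sub F r c s hcs hker _ _)
      rw [mat_expand]
      refine Submodule.sum_mem _ fun i _ => Submodule.smul_mem_smul ?_ Submodule.mem_top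
      exact ha1 q (LinearMap.proj i ∘ₗ c (n + 1)) (fun m hm => by simp [(hker _ m).2 hm])
    have hx : ∀ x ∈ X, ∀ m : M, x ^ n • m ∈ (a • ⊤ : Submodule A M) ⊔ F (n + 1) := by
      intro x hx m
      rw [← add_sub_cancel (s 1 (c 1 m)) m, smul_add]
      refine add_mem ?_ ?_
      · rw [mat_expand, Finset.smul_sum]
        refine Submodule.sum_mem _ fun i _ => ?_
        rw [smul_comm]
        exact Submodule.smul_mem _ _ (hv (⟨x, hx⟩, i))
      · exact mat_smul_mem I F hFI a n 1 _ (Ideal.pow_mem_pow (hX x hx) n) _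
          (Submodule.mem_sup_right (mat_sub F r c s hcs hker 1 m))
    let T := X.card * n + 1
    have hJT : ∀ p ∈ J ^ T, ∀ m : M, p • m ∈ (a • ⊤ : Submodule A M) ⊔ F (T + 1) := by
      intro p hp
      have hp' : p ∈ Ideal.span ((X : Set R) ^ T) := by
        have h := Submodule.span_pow (R := R) (X : Set R) T
        rw [← show J ^ T = Ideal.span ((X : Set R) ^ T) from h]
        exact hp
      refine Submodule.span_induction ?_ ?_ ?_ ?_ hp'
      · intro p hp m
        obtain ⟨x, hxX, d, y, hy, hd, rfl⟩ := mat_pigeon I X hX n p hp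
        rw [mul_smul]
        have := mat_smul_mem I F hFI a d (n + 1) y hy _ (hx x hxX m)
        rwa [← add_assoc, hd] at this
      · intro m; simp
      · intro p p' _ _ h h' m
        rw [add_smul]; exact add_mem (h m) (h' m)
      · intro b p _ h m
        rw [smul_eq_mul, mul_comm, mul_smul]; exact h _
    refine hne T (mat_rank F r c s hcs hker hF a ha T ?_)
    intro m hm
    rw [hFI] at hm
    obtain ⟨u, hu, w, hw, rfl⟩ := Submodule.mem_sup.mp (mat_pow_sup I J hJI hJ T hm)
    refine add_mem ?_ (Submodule.mem_sup_right (by rw [hFI]; exact hw))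
    refine Submodule.smul_induction_on hu (fun p hp m _ => hJT p hp m) ?_
    intro _ _ h h'; exact add_mem h h'
  choose φ hφ1 hφ2 using main
  let E := Fintype.equivFin κ
  refine ⟨Fintype.card κ, fun q => if h : q < Fintype.card κ then ((E.symm ⟨q, h⟩).1 : R) else 0,
    fun q => if h : q < Fintype.card κ then s 1 (Pi.single (E.symm ⟨q, h⟩).2 1) else 0, ?_, ?_⟩
  · intro q
    dsimp only
    split_ifs with h
    · exact hX _ (E.symm ⟨q, h⟩).1.2
    · exact zero_mem _
  · intro n
    refine ⟨fun q => if h : q < Fintype.card κ then φ n (E.symm ⟨q, h⟩) else 0, ?_, ?_⟩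
    · intro q m hm
      dsimp only
      split_ifs with h
      · exact hφ1 n _ m hm
      · rfl
    · rw [Finset.sum_range]
      refine Eq.trans ?_ ((E.symm.sum_comp _).trans (hφ2 n))
      refine Finset.sum_congr rfl fun q _ => ?_
      simp

include hFI in
theorem mat_smul_mem' (d n : ℕ) (y : R) (hy : y ∈ I ^ d) (z : M)
    (hz : z ∈ F n) : y • z ∈ F (d + n) := by
  rw [hFI] at hz ⊢
  rw [Submodule.restrictScalars_mem] at hz ⊢
  rw [pow_add, mul_smul]
  exact Submodule.smul_mem_smul hy hz

omit [Algebra A R] [IsScalarTower A R M] in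
theorem mat_lsmul [SMulCommClass R A M] (y : R) : ∃ μ : M →ₗ[A] M, ∀ m, μ m = y • m :=
  ⟨{ toFun := fun m => y • m, map_add' := smul_add y, map_smul' := fun b m => smul_comm y b m },
    fun _ => rfl⟩

include hFI hcs hker in
theorem mat_unimod (hF : Antitone F) (hF0 : F 0 = ⊤) (hne : ∀ t, F t ≠ F (t + 1)) (t : ℕ) :
    ∃ u, t ≤ u ∧ ∃ φ : M →ₗ[A] A, (∀ m ∈ F u, φ m = 0) ∧ ∃ m ∈ F t, φ m = 1 := by
  obtain ⟨N, x, e, hx, h⟩ := mat_key I F hFI r c s hcs hker hF hne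
  obtain ⟨φ, h1, h2⟩ := h (t + N)
  choose μ hμ using fun y : R => mat_lsmul (A := A) (M := M) y
  have p1 : ∀ q < N, ∀ m ∈ F (t + q + 1), (φ q ∘ₗ μ (x q ^ (N - q))) m = 0 := by
    intro q hq m hm
    rw [LinearMap.comp_apply, hμ]
    refine h1 q _ ?_
    have := mat_smul_mem' I F hFI (N - q) (t + q + 1) _ (Ideal.pow_mem_pow (hx q) _) m hm
    have e : N - q + (t + q + 1) = t + N + 1 := by omega
    rwa [e] at this
  have p2 : ∀ q < N, x q ^ (t + q) • e q ∈ F (t + q) := by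
    intro q hq
    have := mat_smul_mem' I F hFI (t + q) 0 _ (Ideal.pow_mem_pow (hx q) _) (e q)
      (by rw [hF0]; trivial)
    exact this
  obtain ⟨Φ, k1, _, m, hm, k2⟩ := mat_combine F r c s hcs hker hF N t
    (fun q => φ q ∘ₗ μ (x q ^ (N - q))) (fun q => x q ^ (t + q) • e q) p1 p2
  refine ⟨t + N, by omega, Φ, k1, m, hm, ?_⟩
  rw [k2, ← h2]
  refine Finset.sum_congr rfl fun q hq => ?_
  have hq := Finset.mem_range.mp hq
  have e : N - q + (t + q) = t + N := by omega
  rw [LinearMap.comp_apply, hμ, ← mul_smul, ← pow_add, e]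

include hcs hker in
omit [IsScalarTower A R M] [Algebra A R] [Module R M] in
theorem mat_stable (hF : Antitone F) (t : ℕ)
    (hall : ∀ φ ∈ matDual F hF, ∀ m ∈ F t, φ m = 0) : Module.Free A (matDual F hF) := by
  let e : matDual F hF ≃ₗ[A] ((Fin (r t) → A) →ₗ[A] A) :=
    { toFun := fun φ => φ.1 ∘ₗ s t
      map_add' := fun _ _ => rfl
      map_smul' := fun _ _ => rfl
      invFun := fun g => ⟨g ∘ₗ c t, t, fun m hm => by simp [(hker t m).2 hm]⟩
      left_inv := by
        intro g
        apply Subtype.ext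
        apply LinearMap.ext
        intro m
        have := hall g.1 g.2 _ (mat_sub F r c s hcs hker t m)
        rw [map_sub, sub_eq_zero] at this
        exact this.symm
      right_inv := by
        intro g
        apply LinearMap.ext
        intro x
        simp [hcs] }
  exact Module.Free.of_equiv e.symm

include hFI in
theorem mat_dual_eq (hF : Antitone F) : ContinuousDual A R I M = matDual F hF := by
  ext φ
  constructor
  · rintro ⟨t, ht⟩
    refine ⟨t, fun m hm => ?_⟩
    rw [hFI, Submodule.restrictScalars_mem] at hm
    have hm' : m ∈ (I ^ t • ⊤ : Submodule R M) := hm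
    clear hm
    induction hm' using Submodule.smul_induction_on' with
    | smul p hp m hm => exact ht p hp m
    | add x hx y hy h1 h2 => rw [map_add, h1, h2, add_zero]
  · rintro ⟨t, ht⟩
    refine ⟨t, fun p hp m => ht _ ?_⟩
    rw [hFI, Submodule.restrictScalars_mem]
    exact Submodule.smul_mem_smul hp Submodule.mem_top

theorem mat_data (N : Submodule R M) [Module.Finite A (M ⧸ N)] [Module.Free A (M ⧸ N)] :
    ∃ (k : ℕ) (c : M →ₗ[A] (Fin k → A)) (s : (Fin k → A) →ₗ[A] M),
      (∀ x, c (s x) = x) ∧ ∀ m, c m = 0 ↔ m ∈ N := by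
  obtain ⟨k, b⟩ : ∃ k : ℕ, Nonempty (Module.Basis (Fin k) A (M ⧸ N)) :=
    ⟨_, ⟨(Module.Free.chooseBasis A _).reindex (Fintype.equivFin _)⟩⟩
  obtain ⟨b⟩ := b
  let π : M →ₗ[A] M ⧸ N := N.mkQ.restrictScalars A
  have hπ : Function.Surjective π := by
    intro y
    obtain ⟨x, hx⟩ := N.mkQ_surjective y
    exact ⟨x, hx⟩
  let c : M →ₗ[A] (Fin k → A) := b.equivFun.toLinearMap ∘ₗ π
  have hc : Function.Surjective c := b.equivFun.surjective.comp hπ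
  obtain ⟨s, hs⟩ := Module.projective_lifting_property c LinearMap.id hc
  refine ⟨k, c, s, fun x => LinearMap.congr_fun hs x, fun m => ?_⟩
  change b.equivFun (π m) = 0 ↔ _
  rw [LinearEquiv.map_eq_zero_iff]
  exact Submodule.Quotient.mk_eq_zero _
end

/-- **Freeness of the relative Matlis dual.**  If every `M/IᵗM` is a finitely generated free
`A`-module, then `Hom_A^cts(M, A)` is a free `A`-module. -/
theorem stmt8 (A : Type) [CommRing A] (R : Type) [CommRing R] [Algebra A R] (I : Ideal R)
    (M : Type) [AddCommGroup M] [Module A M] [Module R M] [IsScalarTower A R M]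
    (hfin : ∀ t : ℕ, 1 ≤ t → Module.Finite A (M ⧸ (I ^ t • ⊤ : Submodule R M)))
    (hfree : ∀ t : ℕ, 1 ≤ t → Module.Free A (M ⧸ (I ^ t • ⊤ : Submodule R M))) :
    Module.Free A (ContinuousDual A R I M) := by
  let F : ℕ → Submodule A M := fun t => (I ^ t • ⊤ : Submodule R M).restrictScalars A
  have hFI : ∀ t, F t = (I ^ t • ⊤ : Submodule R M).restrictScalars A := fun t => rfl
  have hF : Antitone F := by
    intro a b hab m hm
    exact Submodule.smul_mono_left (Ideal.pow_le_pow_right hab) hm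
  have hF0 : F 0 = ⊤ := by
    ext m; simp [F]
  have hdata : ∀ t, ∃ (k : ℕ) (c : M →ₗ[A] (Fin k → A)) (s : (Fin k → A) →ₗ[A] M),
      (∀ x, c (s x) = x) ∧ ∀ m, c m = 0 ↔ m ∈ F t := by
    intro t
    rcases Nat.eq_zero_or_pos t with rfl | ht
    · exact ⟨0, 0, 0, fun x => Subsingleton.elim _ _, fun m => by simp [hF0]⟩
    have := hfin t ht
    have := hfree t ht
    exact mat_data (A := A) (I ^ t • ⊤ : Submodule R M)
  choose r c s hcs hker using hdata
  have hD : ContinuousDual A R I M = matDual F hF := mat_dual_eq I F hFI hF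
  rw [hD]
  by_cases hne : ∀ t, F t ≠ F (t + 1)
  · obtain ⟨f, hf⟩ := mat_surj F hF (mat_unimod I F hFI r c s hcs hker hF hF0 hne)
    obtain ⟨i, p, hip⟩ := mat_proj F hF r c s hcs hker hF0
    exact mat_swindle (D := matDual F hF) i p hip f hf
  · push Not at hne
    obtain ⟨t, ht⟩ := hne
    have hst : ∀ k, F (t + k) = F t := by
      intro k
      induction k with
      | zero => rfl
      | succ k ih =>
        have e : ∀ n, (I ^ (n + 1) • ⊤ : Submodule R M) = I • (I ^ n • ⊤ : Submodule R M) := by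
          intro n; rw [← mul_smul, pow_succ']
        have ih' : (I ^ (t + k) • ⊤ : Submodule R M) = I ^ t • ⊤ :=
          Submodule.restrictScalars_injective A R M ih
        have : (I ^ (t + (k + 1)) • ⊤ : Submodule R M) = I ^ (t + 1) • ⊤ := by
          rw [← add_assoc, e, ih', ← e]
        rw [ht, hFI, this]
    have hall : ∀ φ ∈ matDual F hF, ∀ m ∈ F t, φ m = 0 := by
      rintro φ ⟨u, hu⟩ m hm
      refine hu m (hF (Nat.le_add_left u t) ?_)
      rwa [hst]
    exact mat_stable F r c s hcs hker hF t hall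
end

section
/- Let A be a Noetherian domain, let R be a Noetherian A-algebra, and let I ⊆ R be an ideal such that R/I is a finitely generated A-module. Let M be a finitely generated R-module. Then there exists a nonzero g ∈ A such that Hom_A^cts(M, A) ⊗_A A_g is a free A_g-module, and for every commutative A-algebra L whose structure map factors through A_g, the natural map Hom_A^cts(M, A) ⊗_A L → Hom_L^cts(M ⊗_A L, L) is an isomorphism of (R ⊗_A L)-modules. -/
variable {A : Type*} [CommRing A] {R : Type*} [CommRing R] [Algebra A R]
  {I : Ideal R} {M : Type*} [AddCommGroup M] [Module A M] [Module R M] [IsScalarTower A R M]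

/-- `Hom_A^cts(M, A)` is an `R`-module via premultiplication: `(r • φ) m = φ (r • m)`. -/
noncomputable instance ContinuousDual.instModuleR : Module R (ContinuousDual A R I M) where
  smul r φ :=
    ⟨{  toFun := fun m => (φ : M →ₗ[A] A) (r • m)
        map_add' := fun m m' => by simp [smul_add]
        map_smul' := fun a m => by
          simp only [RingHom.id_apply]
          rw [smul_comm r a m, map_smul] },
      by
        obtain ⟨t, ht⟩ := φ.2
        exact ⟨t, fun s hs m => by
          have : s • r • m = r • s • m := smul_comm s r m
          simpa [this] using ht s hs (r • m)⟩⟩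
  one_smul φ := by ext m; exact congrArg _ (one_smul R m)
  mul_smul r s φ := by
    ext m
    show (φ : M →ₗ[A] A) ((r * s) • m) = (φ : M →ₗ[A] A) (s • r • m)
    rw [smul_smul, mul_comm r s]
  smul_zero r := by ext m; rfl
  smul_add r φ ψ := by ext m; rfl
  add_smul r s φ := by
    ext m
    show (φ : M →ₗ[A] A) ((r + s) • m) = (φ : M →ₗ[A] A) (r • m) + (φ : M →ₗ[A] A) (s • m)
    rw [add_smul, map_add]
  zero_smul φ := by
    ext m
    show (φ : M →ₗ[A] A) ((0 : R) • m) = 0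
    rw [zero_smul, map_zero]

lemma ContinuousDual.smul_apply (r : R) (φ : ContinuousDual A R I M) (m : M) :
    ((r • φ : ContinuousDual A R I M) : M →ₗ[A] A) m = (φ : M →ₗ[A] A) (r • m) := rfl

noncomputable instance : SMulCommClass R R (ContinuousDual A R I M) where
  smul_comm r s φ := by
    ext m
    show (φ : M →ₗ[A] A) (s • r • m) = (φ : M →ₗ[A] A) (r • s • m)
    rw [smul_comm s r m]

open scoped TensorProduct

set_option synthInstance.maxHeartbeats 1000000
set_option maxHeartbeats 1000000

attribute [local instance] Algebra.TensorProduct.rightAlgebra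

/-- The two scalar actions on `R ⊗[A] L` (of `R` on the left and of `L` on the right)
commute. -/
noncomputable instance tensorSMulCommClass (A R L : Type) [CommRing A] [CommRing R] [CommRing L]
    [Algebra A R] [Algebra A L] : SMulCommClass R L (R ⊗[A] L) :=
  ⟨fun r l x => by
    rw [Algebra.smul_def, Algebra.smul_def, Algebra.smul_def, Algebra.smul_def, mul_left_comm]⟩

theorem filt_dual {A : Type} [CommRing A] [IsDomain A] {M : Type} [AddCommGroup M] [Module A M]
    {P K : Type} [LinearOrder K] (deg : P → ℕ) (key : P → K) (hkey : Function.Injective key)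
    (hmono : ∀ p q, key p < key q → deg p ≤ deg q) (hfin : ∀ t, {p | deg p ≤ t}.Finite)
    (b : P → M) (F : ℕ → Submodule A M) (hF : Antitone F) (hF0 : F 0 = ⊤)
    (hb : ∀ p, b p ∈ F (deg p))
    (hspan : ∀ t, F t ≤ Submodule.span A (b '' {p | deg p = t}) ⊔ F (t + 1))
    (g : A)
    (hg : ∀ p, (∀ a : A, a • b p ∈ Submodule.span A (b '' {q | key p < key q ∧ deg q = deg p})
        ⊔ F (deg p + 1) → a = 0) ∨
      g • b p ∈ Submodule.span A (b '' {q | key p < key q ∧ deg q = deg p}) ⊔ F (deg p + 1)) :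
    ∃ S : Set P,
      (∀ t m, ∃ e : ℕ, g ^ e • m ∈ Submodule.span A (b '' {p | p ∈ S ∧ deg p < t}) ⊔ F t) ∧
      ∀ p ∈ S, ∃ (φ : M →ₗ[A] A) (e : ℕ), φ (b p) = g ^ e ∧ (∀ q ∈ S, q ≠ p → φ (b q) = 0) ∧
        ∀ m ∈ F (deg p + 1), φ m = 0 := by
  classical
  set G : P → Submodule A M := fun p =>
    Submodule.span A (b '' {q | key p < key q ∧ deg q = deg p}) ⊔ F (deg p + 1) with hG
  set S : Set P := {p | ∀ a : A, a • b p ∈ G p → a = 0} with hS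
  set B : ℕ → Submodule A M := fun t =>
    Submodule.span A (b '' {p | p ∈ S ∧ deg p < t}) ⊔ F t with hB
  -- saturation
  let W : ℕ → Submodule A M := fun t =>
    { carrier := {m | ∃ e : ℕ, g ^ e • m ∈ B t}
      zero_mem' := ⟨0, by simp⟩
      add_mem' := by
        rintro x y ⟨e, he⟩ ⟨f, hf⟩
        refine ⟨e + f, ?_⟩
        rw [smul_add]
        refine add_mem ?_ ?_
        · rw [add_comm, pow_add, mul_smul]; exact Submodule.smul_mem _ _ he
        · rw [pow_add, mul_smul]; exact Submodule.smul_mem _ _ hf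
      smul_mem' := by
        rintro a x ⟨e, he⟩
        exact ⟨e, by rw [smul_comm]; exact Submodule.smul_mem _ _ he⟩ }
  have hBW : ∀ t, B t ≤ W t := fun t m hm => ⟨0, by simpa using hm⟩
  have hWsat : ∀ t m, ∀ e : ℕ, g ^ e • m ∈ W t → m ∈ W t := by
    rintro t m e ⟨f, hf⟩
    exact ⟨f + e, by rw [pow_add, mul_smul]; exact hf⟩
  have hbW : ∀ p, b p ∈ W (deg p + 1) := by
    intro p
    by_contra hp
    have hfin' : {q | deg q = deg p ∧ b q ∉ W (deg p + 1)}.Finite :=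
      (hfin (deg p)).subset (fun q hq => le_of_eq hq.1)
    obtain ⟨q, ⟨hq1, hq2⟩, hmax⟩ := Set.exists_max_image _ key hfin' ⟨p, rfl, hp⟩
    apply hq2
    rcases hg q with h | h
    · apply hBW
      exact Submodule.mem_sup_left (Submodule.subset_span ⟨q, ⟨h, by omega⟩, rfl⟩)
    · apply hWsat _ _ 1
      rw [pow_one]
      refine (?_ : G q ≤ W (deg p + 1)) h
      refine sup_le (Submodule.span_le.2 ?_) ?_
      · rintro _ ⟨r, ⟨hr1, hr2⟩, rfl⟩
        by_contra hr
        exact absurd (hmax r ⟨by omega, hr⟩) (not_le.2 hr1)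
      · rw [hq1]
        exact le_trans le_sup_right (hBW _)
  have hWtop : ∀ t, W t = ⊤ := by
    intro t
    induction t with
    | zero => exact top_le_iff.1 (le_trans (by rw [← hF0]; exact le_sup_right) (hBW 0))
    | succ t ih =>
      have hFW : F t ≤ W (t + 1) := by
        refine le_trans (hspan t) (sup_le (Submodule.span_le.2 ?_) (le_trans le_sup_right (hBW _)))
        rintro _ ⟨p, rfl, rfl⟩
        exact hbW p
      refine top_le_iff.1 ?_
      rintro m -
      have hm : m ∈ W t := ih ▸ Submodule.mem_top
      obtain ⟨e, he⟩ := hm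
      refine hWsat _ _ e ?_
      refine (sup_le ?_ hFW : B t ≤ W (t + 1)) he
      refine le_trans (le_trans (Submodule.span_mono ?_) le_sup_left) (hBW _)
      exact Set.image_mono (fun p hp => ⟨hp.1, by have := hp.2; omega⟩)
  have hgen : ∀ t, Submodule.span A (b '' {p | deg p < t}) ⊔ F t = ⊤ := by
    intro t
    induction t with
    | zero => rw [hF0, sup_top_eq]
    | succ t ih =>
      rw [eq_top_iff, ← ih]
      refine sup_le (le_trans (Submodule.span_mono
        (Set.image_mono (fun p (hp : deg p < t) => ?_))) le_sup_left) ?_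
      · exact Nat.lt_succ_of_lt hp
      · refine le_trans (hspan t) (sup_le_sup_right (Submodule.span_mono (Set.image_mono ?_)) _)
        exact fun p (hp : deg p = t) => by simp [hp]
  have hunif : ∀ t, ∃ e : ℕ, ∀ m, g ^ e • m ∈ B t := by
    intro t
    have hf : {p | deg p < t}.Finite := (hfin t).subset (fun p (hp : deg p < t) => hp.le)
    have : ∀ p, ∃ e : ℕ, g ^ e • b p ∈ B t := fun p =>
      (hWtop t ▸ Submodule.mem_top : b p ∈ W t)
    choose e he using this
    refine ⟨∑ p ∈ hf.toFinset, e p, ?_⟩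
    set E := ∑ p ∈ hf.toFinset, e p with hE
    suffices h : ⊤ ≤ (B t).comap (LinearMap.lsmul A M (g ^ E)) from
      fun m => h (Submodule.mem_top (x := m))
    rw [← hgen t]
    refine sup_le (Submodule.span_le.2 ?_) ?_
    · rintro _ ⟨p, hp, rfl⟩
      have hle : e p ≤ E := Finset.single_le_sum (f := e) (fun _ _ => Nat.zero_le _)
        (hf.mem_toFinset.2 hp)
      obtain ⟨d, hd⟩ := Nat.exists_eq_add_of_le hle
      show g ^ E • b p ∈ B t
      rw [hd, add_comm, pow_add, mul_smul]
      exact Submodule.smul_mem _ _ (he p)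
    · intro m hm
      exact Submodule.smul_mem _ _ (Submodule.mem_sup_right hm)
  have hLI : ∀ t, LinearIndependent A
      (fun p : {p | p ∈ S ∧ deg p < t} => (F t).mkQ (b p.1)) := by
    intro t
    rw [linearIndependent_iff]
    intro l hl
    by_contra hne
    have hsupp : l.support.Nonempty := Finsupp.support_nonempty_iff.2 hne
    obtain ⟨p, hp, hmin⟩ := Finset.exists_min_image l.support (fun p => key p.1) hsupp
    have hmem : ∑ q ∈ l.support, l q • b q.1 ∈ F t := by
      rw [← Submodule.ker_mkQ (F t), LinearMap.mem_ker, map_sum, ← hl,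
        Finsupp.linearCombination_apply, Finsupp.sum]
      simp
    rw [← Finset.add_sum_erase _ _ hp] at hmem
    have hFle : F t ≤ G p.1 := le_trans (hF (by have := p.2.2; omega)) le_sup_right
    have hrest : ∑ q ∈ l.support.erase p, l q • b q.1 ∈ G p.1 := by
      refine Submodule.sum_mem _ (fun q hq => Submodule.smul_mem _ _ ?_)
      rw [Finset.mem_erase] at hq
      have hlt : key p.1 < key q.1 := lt_of_le_of_ne (hmin q hq.2)
        (fun h => hq.1 (Subtype.ext (hkey h.symm)))
      rcases (hmono _ _ hlt).eq_or_lt with h | h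
      · exact Submodule.mem_sup_left (Submodule.subset_span ⟨q.1, ⟨hlt, h.symm⟩, rfl⟩)
      · exact Submodule.mem_sup_right (hF h (hb q.1))
    have : l p • b p.1 ∈ G p.1 := ((Submodule.add_mem_iff_left _ hrest).1 (hFle hmem))
    exact (Finsupp.mem_support_iff.1 hp) (p.2.1 _ this)
  refine ⟨S, fun t m => (hWtop t ▸ Submodule.mem_top : m ∈ W t), ?_⟩
  intro p hp
  obtain ⟨e, he⟩ := hunif (deg p + 1)
  set t := deg p + 1 with ht
  set v := (fun p : {p | p ∈ S ∧ deg p < t} => (F t).mkQ (b p.1)) with hv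
  have hrange : ∀ m, (((F t).mkQ).comp (LinearMap.lsmul A M (g ^ e))) m
      ∈ Submodule.span A (Set.range v) := by
    intro m
    have h1 : (F t).mkQ (g ^ e • m) ∈ (B t).map (F t).mkQ := Submodule.mem_map_of_mem (he m)
    rw [hB] at h1
    simp only [Submodule.map_sup, Submodule.mkQ_map_self, sup_bot_eq, Submodule.map_span] at h1
    refine Submodule.span_mono ?_ h1
    rintro _ ⟨_, ⟨q, hq, rfl⟩, rfl⟩
    exact ⟨⟨q, hq⟩, rfl⟩
  let p' : {p | p ∈ S ∧ deg p < t} := ⟨p, hp, by omega⟩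
  let φ : M →ₗ[A] A := (Finsupp.lapply p').comp ((hLI t).repr.comp
    (LinearMap.codRestrict _ _ hrange))
  have hφb : ∀ q : {p | p ∈ S ∧ deg p < t}, φ (b q.1) = Finsupp.single q (g ^ e) p' := by
    intro q
    have : (hLI t).repr (LinearMap.codRestrict _ _ hrange (b q.1)) = Finsupp.single q (g ^ e) := by
      apply (hLI t).repr_eq
      simp
    exact congrArg (fun l => l p') this
  have hφF : ∀ m ∈ F t, φ m = 0 := by
    intro m hm
    have : (hLI t).repr (LinearMap.codRestrict _ _ hrange m) = 0 := by
      apply (hLI t).repr_eq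
      rw [map_zero]
      symm
      show (F t).mkQ (g ^ e • m) = 0
      rw [← LinearMap.mem_ker, Submodule.ker_mkQ]
      exact Submodule.smul_mem _ _ hm
    exact congrArg (fun l => l p') this
  refine ⟨φ, e, ?_, ?_, hφF⟩
  · have := hφb p'
    simpa using this
  · intro q hq hqp
    by_cases hd : deg q < t
    · rw [hφb ⟨q, hq, hd⟩, Finsupp.single_eq_of_ne]
      intro h
      exact hqp (congrArg Subtype.val h).symm
    · exact hφF _ (hF (not_lt.1 hd) (hb q))

theorem mono_key {σ κ : Type} [LinearOrder σ] [WellFoundedGT σ] [LinearOrder κ] (p q : (σ →₀ ℕ) × κ)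
    (h : toLex (MonomialOrder.degLex.toSyn p.1, p.2) < toLex (MonomialOrder.degLex.toSyn q.1, q.2)) :
    p.1.degree ≤ q.1.degree := by
  have h1 : MonomialOrder.degLex.toSyn p.1 ≤ MonomialOrder.degLex.toSyn q.1 := by
    rw [Prod.Lex.toLex_lt_toLex] at h
    rcases h with h | h
    · exact h.le
    · exact h.1.le
  rw [MonomialOrder.degLex_le_iff, Finsupp.DegLex.le_iff] at h1
  rcases h1 with h | h
  · exact h.le
  · exact h.1.le

theorem dickson {A : Type} [CommRing A] [IsDomain A] {σ κ : Type} [Finite σ] [Finite κ]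
    (J : (σ →₀ ℕ) × κ → Set A) (hJ : ∀ α β k, J (α, k) ⊆ J (α + β, k))
    (hmul : ∀ p a c, a ∈ J p → c * a ∈ J p) :
    ∃ g : A, g ≠ 0 ∧ ∀ p, (∀ a ∈ J p, a = 0) ∨ g ∈ J p := by
  classical
  have hk : ∀ k, ∃ g : A, g ≠ 0 ∧ ∀ α, (∀ a ∈ J (α, k), a = 0) ∨ g ∈ J (α, k) := by
    intro k
    let Q : (σ →₀ ℕ) → Prop := fun α => ∃ a ∈ J (α, k), a ≠ 0
    have hf : {α | Minimal Q α}.Finite :=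
      (setOfPred_minimal_antichain Q).finite_of_partiallyWellOrderedOn
        (Set.isPWO_of_wellQuasiOrderedLE _)
    have : ∀ α, ∃ a : A, a ≠ 0 ∧ (Q α → a ∈ J (α, k)) := by
      intro α
      by_cases h : Q α
      · obtain ⟨a, ha, h0⟩ := h
        exact ⟨a, h0, fun _ => ha⟩
      · exact ⟨1, one_ne_zero, fun h' => absurd h' h⟩
    choose c hc0 hc using this
    refine ⟨∏ α ∈ hf.toFinset, c α, Finset.prod_ne_zero_iff.2 (fun α _ => hc0 α), ?_⟩
    intro α
    by_cases h : Q α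
    · right
      obtain ⟨β, hβα, hβ⟩ := exists_minimal_le_of_wellFoundedLT Q α h
      obtain ⟨γ, rfl⟩ := exists_add_of_le hβα
      apply hJ
      rw [← Finset.prod_erase_mul _ _ (hf.mem_toFinset.2 hβ)]
      exact hmul _ _ _ (hc β hβ.1)
    · left
      intro a ha
      by_contra h0
      exact h ⟨a, ha, h0⟩
  choose c hc0 hc using hk
  have := Fintype.ofFinite κ
  refine ⟨∏ k, c k, Finset.prod_ne_zero_iff.2 (fun k _ => hc0 k), ?_⟩
  rintro ⟨α, k⟩
  refine (hc k α).imp_right (fun h => ?_)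
  rw [← Finset.prod_erase_mul _ _ (Finset.mem_univ k)]
  exact hmul _ _ _ h

theorem exists_system (A : Type) [CommRing A] [IsDomain A]
    (R : Type) [CommRing R] [Algebra A R] [IsNoetherianRing R]
    (I : Ideal R) [Module.Finite A (R ⧸ I)]
    (M : Type) [AddCommGroup M] [Module A M] [Module R M] [IsScalarTower A R M]
    [Module.Finite R M] :
    ∃ g : A, g ≠ 0 ∧ ∃ (S : Type) (deg : S → ℕ) (b : S → M) (φ : S → M →ₗ[A] A) (e : S → ℕ),
      (∀ t, {p | deg p < t}.Finite) ∧
      (∀ p, φ p (b p) = g ^ e p) ∧ (∀ p q, q ≠ p → φ p (b q) = 0) ∧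
      (∀ p, ∀ m ∈ (I ^ (deg p + 1) • ⊤ : Submodule R M), φ p m = 0) ∧
      (∀ t m, ∃ e : ℕ, g ^ e • m ∈ Submodule.span A (b '' {p | deg p < t}) ⊔
        (I ^ t • ⊤ : Submodule R M).restrictScalars A) := by
  classical
  obtain ⟨n, x, hx⟩ := Submodule.fg_iff_exists_fin_generating_family.1 (IsNoetherian.noetherian I)
  have hfM : Module.Finite A (M ⧸ (I • ⊤ : Submodule R M)) :=
    Module.Finite.trans (R ⧸ I) _
  obtain ⟨s, w', hw'⟩ := Module.Finite.exists_fin (R := A) (M := M ⧸ (I • ⊤ : Submodule R M))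
  choose w hw using fun k => Submodule.mkQ_surjective (I • ⊤ : Submodule R M) (w' k)
  let mon : (Fin n →₀ ℕ) → R := fun α => α.prod fun i e => x i ^ e
  have mon_add : ∀ α β, mon (α + β) = mon α * mon β := fun α β =>
    Finsupp.prod_add_index' (by simp) (by intros; rw [pow_add])
  have hxI : ∀ i, x i ∈ I := fun i => hx ▸ Submodule.subset_span ⟨i, rfl⟩
  have mon_mem : ∀ α, mon α ∈ I ^ α.degree := by
    intro α
    simp only [mon, Finsupp.prod, Finsupp.degree_apply]
    rw [← Finset.prod_pow_eq_pow_sum]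
    exact Ideal.prod_mem_prod (fun i _ => Ideal.pow_mem_pow (hxI i) _)
  let b : (Fin n →₀ ℕ) × Fin s → M := fun p => mon p.1 • w p.2
  let F : ℕ → Submodule A M := fun t => (I ^ t • ⊤ : Submodule R M).restrictScalars A
  have hF : Antitone F := fun t u htu m hm =>
    Submodule.smul_mono_left (Ideal.pow_le_pow_right htu) hm
  have hF0 : F 0 = ⊤ := by simp [F]
  have hbF : ∀ p, b p ∈ F p.1.degree := by
    intro p
    have h : mon p.1 • w p.2 ∈ (I ^ p.1.degree • ⊤ : Submodule R M) :=
      Submodule.smul_mem_smul (mon_mem p.1) Submodule.mem_top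
    exact h
  have hmulF : ∀ t u (r : R) m, r ∈ I ^ u → m ∈ F t → r • m ∈ F (u + t) := by
    intro t u r m hr hm
    show r • m ∈ (I ^ (u + t) • ⊤ : Submodule R M)
    rw [pow_add, Submodule.mul_smul]
    exact Submodule.smul_mem_smul hr hm
  have hspan : ∀ t, F t ≤ Submodule.span A (b '' {p | p.1.degree = t}) ⊔ F (t + 1) := by
    intro t
    induction t with
    | zero =>
      intro m _
      have h1 : (I • ⊤ : Submodule R M).mkQ m ∈ Submodule.span A (Set.range w') :=
        hw' ▸ Submodule.mem_top
      have h2 : Submodule.span A (Set.range w') = (Submodule.span A (Set.range w)).map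
          ((I • ⊤ : Submodule R M).mkQ.restrictScalars A) := by
        rw [Submodule.map_span, ← Set.range_comp]
        congr 2
        funext k
        exact (hw k).symm
      rw [h2] at h1
      obtain ⟨y, hy, hym⟩ := h1
      have h3 : m - y ∈ F 1 := by
        show m - y ∈ (I ^ 1 • ⊤ : Submodule R M)
        rw [pow_one, ← Submodule.ker_mkQ (I • ⊤ : Submodule R M), LinearMap.mem_ker, map_sub,
          sub_eq_zero]
        exact hym.symm
      rw [← add_sub_cancel y m]
      refine Submodule.add_mem_sup (Submodule.span_mono ?_ hy) h3
      rintro _ ⟨k, rfl⟩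
      exact ⟨(0, k), by simp, by simp [b, mon]⟩
    | succ t ih =>
      have key : ∀ i, ∀ m ∈ F t, x i • m ∈
          Submodule.span A (b '' {p | p.1.degree = t + 1}) ⊔ F (t + 1 + 1) := by
        intro i m hm
        suffices h : Submodule.span A (b '' {p | p.1.degree = t}) ⊔ F (t + 1) ≤
            (Submodule.span A (b '' {p | p.1.degree = t + 1}) ⊔ F (t + 1 + 1)).comap
              (Algebra.lsmul A A M (x i)) from h (ih hm)
        refine sup_le (Submodule.span_le.2 ?_) ?_
        · rintro _ ⟨p, hp, rfl⟩
          refine Submodule.mem_sup_left (Submodule.subset_span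
            ⟨(Finsupp.single i 1 + p.1, p.2), ?_, ?_⟩)
          · have hp' : p.1.degree = t := hp
            simp [hp', add_comm]
          · have h1 : mon (Finsupp.single i 1) = x i := by
              show (Finsupp.single i 1).prod (fun i e => x i ^ e) = x i
              exact (Finsupp.prod_single_index (h := fun i e => x i ^ e) (pow_zero _)).trans (pow_one _)
            show mon (Finsupp.single i 1 + p.1) • w p.2 = x i • mon p.1 • w p.2
            rw [mon_add, h1, mul_smul]
        · intro m hm
          refine Submodule.mem_sup_right ?_
          have := hmulF (t + 1) 1 (x i) m (by simpa using hxI i) hm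
          rwa [add_comm 1] at this
      intro m hm
      have hm' : m ∈ (I • (I ^ t • ⊤ : Submodule R M) : Submodule R M) := by
        rw [← Submodule.mul_smul, ← pow_succ']
        exact hm
      refine Submodule.smul_induction_on hm' ?_ (fun _ _ => add_mem)
      intro r hr m hm
      rw [← hx] at hr
      induction hr using Submodule.span_induction generalizing m with
      | mem r hr =>
        obtain ⟨i, rfl⟩ := hr
        exact key i m hm
      | zero => simp
      | add r r' _ _ h1 h2 => rw [add_smul]; exact add_mem (h1 m hm) (h2 m hm)
      | smul c r _ h1 =>
        rw [smul_eq_mul, mul_comm, mul_smul]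
        exact h1 _ (Submodule.smul_mem _ _ hm)
  let key : (Fin n →₀ ℕ) × Fin s → (MonomialOrder.degLex (σ := Fin n)).syn ×ₗ Fin s :=
    fun p => toLex (MonomialOrder.degLex.toSyn p.1, p.2)
  have hkey : Function.Injective key := by
    rintro ⟨α, k⟩ ⟨β, l⟩ h
    have := toLex.injective h
    simpa using this
  let G : (Fin n →₀ ℕ) × Fin s → Submodule A M := fun p =>
    Submodule.span A (b '' {q | key p < key q ∧ q.1.degree = p.1.degree}) ⊔ F (p.1.degree + 1)
  obtain ⟨g, hg0, hg⟩ := dickson (fun p => {a : A | a • b p ∈ G p}) (by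
      intro α β k a ha
      have hb' : ∀ γ l, b (γ + β, l) = mon β • b (γ, l) := by
        intro γ l
        simp only [b, mon_add, smul_smul, mul_comm]
      show a • b (α + β, k) ∈ G (α + β, k)
      rw [hb', smul_comm]
      suffices h : G (α, k) ≤ (G (α + β, k)).comap (Algebra.lsmul A A M (mon β)) from h ha
      refine sup_le (Submodule.span_le.2 ?_) ?_
      · rintro _ ⟨⟨γ, l⟩, ⟨hγ1, hγ2⟩, rfl⟩
        refine Submodule.mem_sup_left (Submodule.subset_span ⟨(γ + β, l), ⟨?_, ?_⟩, hb' γ l⟩)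
        · simp only [key, Prod.Lex.toLex_lt_toLex, map_add] at hγ1 ⊢
          simpa using hγ1
        · simpa using hγ2
      · intro m hm
        refine Submodule.mem_sup_right ?_
        have := hmulF _ _ _ _ (mon_mem β) hm
        have h2 : (α + β).degree + 1 = β.degree + (α.degree + 1) := by
          rw [map_add]; ring
        simp only [h2]
        exact this) (by
      intro p a c ha
      show (c * a) • b p ∈ G p
      rw [mul_smul]
      exact Submodule.smul_mem _ _ ha)
  have hfin : ∀ t, {p : (Fin n →₀ ℕ) × Fin s | p.1.degree ≤ t}.Finite := by
    intro t
    refine ((Finsupp.finite_of_degree_le (σ := Fin n) t).prod (Set.finite_univ (α := Fin s))).subset ?_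
    rintro p hp
    exact ⟨hp, trivial⟩
  obtain ⟨S, hS1, hS2⟩ := filt_dual (fun p : (Fin n →₀ ℕ) × Fin s => p.1.degree) key hkey
    (fun p q h => mono_key p q h) hfin b F hF hF0 hbF hspan g hg
  choose φ e h1 h2 h3 using hS2
  refine ⟨g, hg0, S, fun p => p.1.1.degree, fun p => b p.1, fun p => φ p.1 p.2,
    fun p => e p.1 p.2, ?_, fun p => h1 _ _, fun p q hqp => h2 _ _ _ q.2
      (fun h => hqp (Subtype.ext h)), fun p m hm => h3 _ _ m hm, ?_⟩
  · intro t
    refine ((hfin t).preimage (Subtype.val_injective.injOn)).subset ?_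
    intro p hp
    have hp' : p.1.1.degree < t := hp
    exact hp'.le
  · intro t m
    obtain ⟨E, hE⟩ := hS1 t m
    refine ⟨E, ?_⟩
    have hle : Submodule.span A (b '' {p | p ∈ S ∧ p.1.degree < t}) ≤
        Submodule.span A ((fun p : S => b p.1) '' {p | p.1.1.degree < t}) := by
      refine Submodule.span_mono ?_
      rintro _ ⟨p, ⟨hp, hd⟩, rfl⟩
      exact ⟨⟨p, hp⟩, hd, rfl⟩
    exact (sup_le_sup_right hle _ : _ ⊔ F t ≤ _ ⊔ F t) hE

theorem exists_natMap (A : Type) [CommRing A] (R : Type) [CommRing R] [Algebra A R]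
    (M : Type) [AddCommGroup M] [Module A M] [Module R M] [IsScalarTower A R M]
    (L : Type) [CommRing L] [Algebra A L] :
    ∃ N : (M →ₗ[A] A) →ₗ[A] (((R ⊗[A] L) ⊗[R] M) →ₗ[L] L),
      ∀ φ (r : R) (ℓ : L) (m : M), N φ ((r ⊗ₜ[A] ℓ) ⊗ₜ[R] m) = φ (r • m) • ℓ := by
  have h : ∀ φ : M →ₗ[A] A, ∃ N : ((R ⊗[A] L) ⊗[R] M) →ₗ[L] L,
      ∀ (r : R) (ℓ : L) (m : M), N ((r ⊗ₜ[A] ℓ) ⊗ₜ[R] m) = φ (r • m) • ℓ := by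
    intro φ
    let f : R ⊗[A] L →ₗ[A] M →ₗ[A] L := TensorProduct.lift
      (LinearMap.mk₂ A (fun (r : R) (ℓ : L) =>
        (LinearMap.toSpanSingleton A L ℓ).comp (φ.comp (Algebra.lsmul A A M r)))
        (by intros; ext; simp [add_smul])
        (by intros; ext; simp [mul_smul])
        (by intros; ext; simp)
        (by intro c r ℓ; ext m; simp [smul_comm c]))
    have hf : ∀ r ℓ m, f (r ⊗ₜ ℓ) m = φ (r • m) • ℓ := by
      intro r ℓ m
      simp [f]
    let N0 : (R ⊗[A] L) ⊗[R] M →+ L := TensorProduct.liftAddHom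
      (LinearMap.toAddMonoidHom'.comp f.toAddMonoidHom) (by
        intro r z m
        show f (r • z) m = f z (r • m)
        induction z using TensorProduct.induction_on with
        | zero => simp
        | tmul s ℓ => rw [TensorProduct.smul_tmul', hf, hf, smul_eq_mul, mul_comm, mul_smul]
        | add y z hy hz => rw [smul_add, map_add, map_add, LinearMap.add_apply,
            LinearMap.add_apply, hy, hz])
    have hN0 : ∀ r ℓ m, N0 ((r ⊗ₜ[A] ℓ) ⊗ₜ[R] m) = φ (r • m) • ℓ := fun r ℓ m => hf r ℓ m
    refine ⟨{ N0 with map_smul' := ?_ }, hN0⟩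
    intro c z
    show N0 (c • z) = c • N0 z
    induction z using TensorProduct.induction_on with
    | zero => rw [smul_zero, map_zero, smul_zero]
    | add y z hy hz => rw [smul_add, map_add, map_add, smul_add, hy, hz]
    | tmul z m =>
      induction z using TensorProduct.induction_on with
      | zero => rw [TensorProduct.zero_tmul, smul_zero, map_zero, smul_zero]
      | add y z hy hz => rw [TensorProduct.add_tmul, smul_add, map_add, map_add, smul_add, hy, hz]
      | tmul r ℓ =>
        have : c • ((r ⊗ₜ[A] ℓ) ⊗ₜ[R] m) = ((r ⊗ₜ[A] (c * ℓ)) ⊗ₜ[R] m : (R ⊗[A] L) ⊗[R] M) := by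
          rw [TensorProduct.smul_tmul', Algebra.smul_def]
          congr 1
          show ((1 : R) ⊗ₜ[A] c) * (r ⊗ₜ[A] ℓ) = _
          rw [Algebra.TensorProduct.tmul_mul_tmul, one_mul]
        rw [this, hN0, hN0, smul_eq_mul, mul_smul_comm]
  choose N hN using h
  have hext : ∀ ψ ψ' : ((R ⊗[A] L) ⊗[R] M) →ₗ[L] L,
      (∀ (r : R) (ℓ : L) (m : M), ψ ((r ⊗ₜ[A] ℓ) ⊗ₜ[R] m) = ψ' ((r ⊗ₜ[A] ℓ) ⊗ₜ[R] m)) →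
      ψ = ψ' := by
    intro ψ ψ' h
    refine LinearMap.ext fun z => ?_
    induction z using TensorProduct.induction_on with
    | zero => rw [map_zero, map_zero]
    | add y z hy hz => rw [map_add, map_add, hy, hz]
    | tmul z m =>
      induction z using TensorProduct.induction_on with
      | zero => rw [TensorProduct.zero_tmul, map_zero, map_zero]
      | add y z hy hz => rw [TensorProduct.add_tmul, map_add, map_add, hy, hz]
      | tmul r ℓ => exact h r ℓ m
  refine ⟨{ toFun := N, map_add' := ?_, map_smul' := ?_ }, hN⟩
  · intro φ ψ
    apply hext
    intro r ℓ m
    rw [LinearMap.add_apply, hN, hN, hN, LinearMap.add_apply, add_smul]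
  · intro a φ
    apply hext
    intro r ℓ m
    rw [RingHom.id_apply, LinearMap.smul_apply, hN, hN, LinearMap.smul_apply, smul_eq_mul, mul_smul]

theorem exists_res (A : Type) [CommRing A] (R : Type) [CommRing R] [Algebra A R]
    (M : Type) [AddCommGroup M] [Module A M] [Module R M] [IsScalarTower A R M]
    (L : Type) [CommRing L] [Algebra A L] (ψ : ((R ⊗[A] L) ⊗[R] M) →ₗ[L] L) :
    ∃ ρ : M →ₗ[A] L, (∀ m, ρ m = ψ ((1 : R ⊗[A] L) ⊗ₜ[R] m)) ∧ (ρ = 0 → ψ = 0) := by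
  have h1 : ∀ (r : R) (ℓ : L) (m : M),
      ((r ⊗ₜ[A] ℓ) ⊗ₜ[R] m : (R ⊗[A] L) ⊗[R] M) = ℓ • ((1 : R ⊗[A] L) ⊗ₜ[R] (r • m)) := by
    intro r ℓ m
    rw [← TensorProduct.smul_tmul, TensorProduct.smul_tmul']
    congr 1
    rw [Algebra.smul_def, Algebra.smul_def, mul_one]
    show _ = ((1 : R) ⊗ₜ[A] ℓ) * (r ⊗ₜ[A] 1)
    rw [Algebra.TensorProduct.tmul_mul_tmul, one_mul, mul_one]
  refine ⟨{ toFun := fun m => ψ ((1 : R ⊗[A] L) ⊗ₜ[R] m)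
            map_add' := fun m m' => by rw [TensorProduct.tmul_add, map_add]
            map_smul' := fun a m => ?_ }, fun m => rfl, ?_⟩
  · have h2 : ((1 : R ⊗[A] L) ⊗ₜ[R] (a • m) : (R ⊗[A] L) ⊗[R] M) =
        (algebraMap A L a) • ((1 : R ⊗[A] L) ⊗ₜ[R] m) := by
      have h3 := h1 1 (algebraMap A L a) m
      rw [one_smul] at h3
      have h4 := h1 (algebraMap A R a) 1 m
      rw [one_smul, algebraMap_smul] at h4
      rw [← h3, ← h4]
      congr 1
      rw [Algebra.algebraMap_eq_smul_one, Algebra.algebraMap_eq_smul_one,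
        TensorProduct.smul_tmul]
    rw [h2, map_smul, RingHom.id_apply, algebraMap_smul]
  · intro h0
    refine LinearMap.ext fun z => ?_
    induction z using TensorProduct.induction_on with
    | zero => rw [map_zero, map_zero]
    | add y z hy hz => rw [map_add, map_add, hy, hz]
    | tmul z m =>
      induction z using TensorProduct.induction_on with
      | zero => rw [TensorProduct.zero_tmul, map_zero, map_zero]
      | add y z hy hz => rw [TensorProduct.add_tmul, map_add, map_add, hy, hz]
      | tmul r ℓ =>
        rw [h1, map_smul]
        have := LinearMap.congr_fun h0 (r • m)
        change ψ ((1 : R ⊗[A] L) ⊗ₜ[R] (r • m)) = 0 at this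
        rw [this, smul_zero, LinearMap.zero_apply]

theorem kills_iff {A : Type} [CommRing A] {R : Type} [CommRing R]
    {M : Type} [AddCommGroup M] [Module A M] [Module R M]
    {V : Type} [AddCommGroup V] [Module A V] (J : Ideal R) (ρ : M →ₗ[A] V)
    (h : ∀ r ∈ J, ∀ m : M, ρ (r • m) = 0) : ∀ m ∈ (J • ⊤ : Submodule R M), ρ m = 0 := by
  intro m hm
  refine Submodule.smul_induction_on hm (fun r hr n _ => h r hr n) ?_
  intro x y hx hy
  rw [map_add, hx, hy, add_zero]

theorem natMap_mem (A : Type) [CommRing A] (R : Type) [CommRing R] [Algebra A R] (I : Ideal R)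
    (M : Type) [AddCommGroup M] [Module A M] [Module R M] [IsScalarTower A R M]
    (L : Type) [CommRing L] [Algebra A L]
    (N : (M →ₗ[A] A) →ₗ[A] (((R ⊗[A] L) ⊗[R] M) →ₗ[L] L))
    (hN : ∀ φ (r : R) (ℓ : L) (m : M), N φ ((r ⊗ₜ[A] ℓ) ⊗ₜ[R] m) = φ (r • m) • ℓ)
    (φ : M →ₗ[A] A) (hφ : φ ∈ ContinuousDual A R I M) :
    N φ ∈ ContinuousDual L (R ⊗[A] L) (Ideal.map (algebraMap R (R ⊗[A] L)) I)
      ((R ⊗[A] L) ⊗[R] M) := by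
  obtain ⟨t, ht⟩ := hφ
  refine ⟨t, ?_⟩
  intro r hr
  rw [← Ideal.map_pow] at hr
  refine Submodule.span_induction (p := fun r _ => ∀ z, N φ (r • z) = 0) ?_ ?_ ?_ ?_ hr
  · rintro _ ⟨r0, hr0, rfl⟩ z
    induction z using TensorProduct.induction_on with
    | zero => rw [smul_zero, map_zero]
    | add y z hy hz => rw [smul_add, map_add, hy, hz, add_zero]
    | tmul z m =>
      induction z using TensorProduct.induction_on with
      | zero => rw [TensorProduct.zero_tmul, smul_zero, map_zero]
      | add y z hy hz => rw [TensorProduct.add_tmul, smul_add, map_add, hy, hz, add_zero]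
      | tmul s ℓ =>
        have : (algebraMap R (R ⊗[A] L) r0) • ((s ⊗ₜ[A] ℓ) ⊗ₜ[R] m : (R ⊗[A] L) ⊗[R] M) =
            ((r0 * s) ⊗ₜ[A] ℓ) ⊗ₜ[R] m := by
          rw [TensorProduct.smul_tmul', smul_eq_mul]
          congr 1
          show (r0 ⊗ₜ[A] (1 : L)) * (s ⊗ₜ[A] ℓ) = _
          rw [Algebra.TensorProduct.tmul_mul_tmul, one_mul]
        rw [this, hN, mul_smul, ht r0 hr0, zero_smul]
  · intro z
    rw [zero_smul, map_zero]
  · intro x y _ _ hx hy z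
    rw [add_smul, map_add, hx, hy, add_zero]
  · intro a x _ hx z
    rw [smul_eq_mul, mul_comm, mul_smul]
    exact hx _

/-- **Generic freeness and base change for the relative Matlis dual.**  Let `A` be a Noetherian
domain, `R` a Noetherian `A`-algebra, `I ⊆ R` an ideal with `R/I` a finitely generated
`A`-module, and `M` a finitely generated `R`-module.  There is a nonzero `g ∈ A` such that
`Hom_A^cts(M, A) ⊗[A] A_g` is a free `A_g`-module and, for every commutative `A`-algebra `L`
whose structure map factors through `A_g` (equivalently, in which `g` becomes a unit), the
natural map `Hom_A^cts(M, A) ⊗[A] L → Hom_L^cts(M ⊗[A] L, L)`, `φ ⊗ ℓ ↦ (m ⊗ ℓ' ↦ φ(m)·ℓℓ')`,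
is an isomorphism (it is automatically `R ⊗[A] L`-linear, being determined by the stated values
on pure tensors; here `M ⊗[A] L` is realized as `(R ⊗[A] L) ⊗[R] M` and `Hom_L^cts` is taken
with respect to the extended ideal `I·(R ⊗[A] L)`). -/
theorem stmt9 (A : Type) [CommRing A] [IsDomain A] [IsNoetherianRing A]
    (R : Type) [CommRing R] [Algebra A R] [IsNoetherianRing R]
    (I : Ideal R) [Module.Finite A (R ⧸ I)]
    (M : Type) [AddCommGroup M] [Module A M] [Module R M] [IsScalarTower A R M]
    [Module.Finite R M] :
    ∃ g : A, g ≠ 0 ∧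
      Module.Free (Localization.Away g)
        (TensorProduct A (Localization.Away g) (ContinuousDual A R I M)) ∧
      ∀ (L : Type) [CommRing L] [Algebra A L], IsUnit (algebraMap A L g) →
        ∃ e : (TensorProduct A L (ContinuousDual A R I M)) ≃ₗ[L]
            ContinuousDual L (R ⊗[A] L) (Ideal.map (algebraMap R (R ⊗[A] L)) I)
              ((R ⊗[A] L) ⊗[R] M),
          ∀ (φ : ContinuousDual A R I M) (ℓ ℓ' : L) (r : R) (m : M),
            (e (ℓ ⊗ₜ[A] φ) : ((R ⊗[A] L) ⊗[R] M) →ₗ[L] L) ((r ⊗ₜ[A] ℓ') ⊗ₜ[R] m) =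
              (φ : M →ₗ[A] A) (r • m) • (ℓ * ℓ') := by

  classical
  obtain ⟨g, hg0, S, deg, b, φ, e, hfin, hdiag, hoff, hkill, hsp⟩ := exists_system A R I M
  -- uniqueness principle
  have huniq : ∀ (V : Type) [AddCommGroup V] [Module A V],
      (∀ (n : ℕ) (v : V), g ^ n • v = 0 → v = 0) → ∀ (t : ℕ) (ρ : M →ₗ[A] V),
      (∀ m ∈ (I ^ t • ⊤ : Submodule R M), ρ m = 0) → (∀ p, deg p < t → ρ (b p) = 0) → ρ = 0 := by
    intro V _ _ hV t ρ h1 h2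
    refine LinearMap.ext fun m => ?_
    obtain ⟨E, hE⟩ := hsp t m
    apply hV E
    rw [← map_smul]
    refine (sup_le (Submodule.span_le.2 ?_) ?_ : _ ≤ LinearMap.ker ρ) hE
    · rintro _ ⟨p, hp, rfl⟩
      exact h2 p hp
    · intro m hm
      exact h1 m hm
  let Φ : S → ContinuousDual A R I M := fun p => ⟨φ p, deg p + 1, fun r hr m =>
    hkill p _ (Submodule.smul_mem_smul hr Submodule.mem_top)⟩
  -- spanning in the base change
  have hspanL : ∀ (L : Type) [CommRing L] [Algebra A L], IsUnit (algebraMap A L g) →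
      Function.Surjective (Finsupp.linearCombination L
        (fun p : S => (1 : L) ⊗ₜ[A] Φ p : S → L ⊗[A] (ContinuousDual A R I M))) := by
    intro L _ _ hL
    rw [← LinearMap.range_eq_top, Finsupp.range_linearCombination, eq_top_iff]
    have h1 : ∀ ψ : ContinuousDual A R I M, (1 : L) ⊗ₜ[A] ψ ∈ Submodule.span L
        (Set.range (fun p : S => (1 : L) ⊗ₜ[A] Φ p : S → L ⊗[A] (ContinuousDual A R I M))) := by
      intro ψ
      obtain ⟨t, ht⟩ := ψ.2
      set T := (hfin t).toFinset with hT
      set E := ∑ p ∈ T, e p with hE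
      have heE : ∀ p ∈ T, e p ≤ E := fun p hp =>
        Finset.single_le_sum (f := e) (fun _ _ => Nat.zero_le _) hp
      have hψ : g ^ E • ψ = ∑ p ∈ T, ((ψ : M →ₗ[A] A) (b p) * g ^ (E - e p)) • Φ p := by
        apply Subtype.ext
        rw [← sub_eq_zero]
        refine huniq A (fun n v hv => ?_) t _ ?_ ?_
        · exact (mul_eq_zero.1 hv).resolve_left (pow_ne_zero _ hg0)
        · intro m hm
          have h2 := kills_iff (I ^ t) (ψ : M →ₗ[A] A) ht m hm
          have h3 : ∀ p ∈ T, φ p m = 0 := by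
            intro p hp
            have hpt : deg p < t := (hfin t).mem_toFinset.1 hp
            exact hkill p m (Submodule.smul_mono_left (Ideal.pow_le_pow_right hpt) hm)
          simp only [LinearMap.sub_apply, Submodule.coe_smul, Submodule.coe_sum,
            LinearMap.smul_apply, LinearMap.sum_apply, h2, smul_zero, zero_sub, neg_eq_zero]
          exact Finset.sum_eq_zero (fun p hp => by rw [h3 p hp, smul_zero])
        · intro q hq
          have hqT : q ∈ T := (hfin t).mem_toFinset.2 hq
          simp only [LinearMap.sub_apply, Submodule.coe_smul, Submodule.coe_sum,
            LinearMap.smul_apply, LinearMap.sum_apply]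
          rw [Finset.sum_eq_single_of_mem q hqT (fun p _ hpq => by
            rw [hoff p q hpq.symm, smul_zero]), hdiag, smul_eq_mul, smul_eq_mul, mul_assoc,
            ← pow_add, Nat.sub_add_cancel (heE q hqT), mul_comm, sub_self]
      obtain ⟨u, hu⟩ := hL.pow E
      have h4 : (1 : L) ⊗ₜ[A] ψ = (↑u⁻¹ : L) • ((1 : L) ⊗ₜ[A] (g ^ E • ψ)) := by
        rw [TensorProduct.tmul_smul, TensorProduct.smul_tmul', TensorProduct.smul_tmul',
          smul_eq_mul, Algebra.smul_def (g ^ E) (1 : L), map_pow, ← hu, mul_one, Units.inv_mul]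
      rw [h4, hψ, TensorProduct.tmul_sum]
      refine Submodule.smul_mem _ _ (Submodule.sum_mem _ (fun p _ => ?_))
      rw [TensorProduct.tmul_smul, ← algebraMap_smul L]
      exact Submodule.smul_mem _ _ (Submodule.subset_span ⟨p, rfl⟩)
    intro z _
    induction z using TensorProduct.induction_on with
    | zero => exact zero_mem _
    | add y z hy hz => exact add_mem (hy trivial) (hz trivial)
    | tmul ℓ ψ =>
      have : ℓ ⊗ₜ[A] ψ = ℓ • ((1 : L) ⊗ₜ[A] ψ) := by
        rw [TensorProduct.smul_tmul', smul_eq_mul, mul_one]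
      rw [this]
      exact Submodule.smul_mem _ _ (h1 ψ)
  have main : ∀ (L : Type) [CommRing L] [Algebra A L], IsUnit (algebraMap A L g) →
      Module.Free L (L ⊗[A] (ContinuousDual A R I M)) ∧
        ∃ e : (TensorProduct A L (ContinuousDual A R I M)) ≃ₗ[L]
            ContinuousDual L (R ⊗[A] L) (Ideal.map (algebraMap R (R ⊗[A] L)) I)
              ((R ⊗[A] L) ⊗[R] M),
          ∀ (φ : ContinuousDual A R I M) (ℓ ℓ' : L) (r : R) (m : M),
            (e (ℓ ⊗ₜ[A] φ) : ((R ⊗[A] L) ⊗[R] M) →ₗ[L] L) ((r ⊗ₜ[A] ℓ') ⊗ₜ[R] m) =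
              (φ : M →ₗ[A] A) (r • m) • (ℓ * ℓ') := by
    intro L _ _ hL
    obtain ⟨N, hN⟩ := exists_natMap A R M L
    let N1 : L ⊗[A] (ContinuousDual A R I M) →ₗ[L] (((R ⊗[A] L) ⊗[R] M) →ₗ[L] L) :=
      LinearMap.liftBaseChange L (N.comp (ContinuousDual A R I M).subtype)
    have hN1 : ∀ ℓ ψ, N1 (ℓ ⊗ₜ[A] ψ) = ℓ • N (ψ : M →ₗ[A] A) := fun ℓ ψ =>
      LinearMap.liftBaseChange_tmul _ _ _ _
    have hN1mem : ∀ z, N1 z ∈ ContinuousDual L (R ⊗[A] L)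
        (Ideal.map (algebraMap R (R ⊗[A] L)) I) ((R ⊗[A] L) ⊗[R] M) := by
      intro z
      induction z using TensorProduct.induction_on with
      | zero => rw [map_zero]; exact zero_mem _
      | add y z hy hz => rw [map_add]; exact add_mem hy hz
      | tmul ℓ ψ =>
        rw [hN1]
        exact Submodule.smul_mem _ _ (natMap_mem A R I M L N hN _ ψ.2)
    let N2 := LinearMap.codRestrict _ N1 hN1mem
    let Θ := Finsupp.linearCombination L
        (fun p : S => (1 : L) ⊗ₜ[A] Φ p : S → L ⊗[A] (ContinuousDual A R I M))
    have hΘ : Function.Surjective Θ := hspanL L hL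
    have hNb : ∀ p (m : M), N (φ p) ((1 : R ⊗[A] L) ⊗ₜ[R] m) = algebraMap A L (φ p m) := by
      intro p m
      rw [Algebra.TensorProduct.one_def, hN, one_smul, Algebra.algebraMap_eq_smul_one]
    have hΘev : ∀ (l : S →₀ L) (m : M), N1 (Θ l) ((1 : R ⊗[A] L) ⊗ₜ[R] m) =
        l.sum fun p ℓ => ℓ * algebraMap A L (φ p m) := by
      intro l m
      simp only [Θ, Finsupp.linearCombination_apply, Finsupp.sum, map_sum, map_smul, hN1,
        LinearMap.sum_apply, LinearMap.smul_apply, one_smul]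
      exact Finset.sum_congr rfl (fun p _ => by rw [← hNb]; rfl)
    have hΘb : ∀ (l : S →₀ L) q, N1 (Θ l) ((1 : R ⊗[A] L) ⊗ₜ[R] b q) =
        l q * algebraMap A L g ^ e q := by
      intro l q
      rw [hΘev, Finsupp.sum, Finset.sum_eq_single q, hdiag, map_pow]
      · intro p _ hpq
        rw [hoff p q hpq.symm, map_zero, mul_zero]
      · intro hq
        rw [Finsupp.notMem_support_iff.1 hq, zero_mul]
    have hinj : ∀ l, N1 (Θ l) = 0 → l = 0 := by
      intro l hl
      ext q
      have := hΘb l q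
      rw [hl, LinearMap.zero_apply] at this
      exact ((hL.pow (e q)).mul_left_eq_zero).1 this.symm
    have hΘinj : Function.Injective Θ := by
      rw [injective_iff_map_eq_zero]
      intro l hl
      exact hinj l (by rw [hl, map_zero])
    have hLtf : ∀ (n : ℕ) (v : L), g ^ n • v = 0 → v = 0 := by
      intro n v hv
      rw [Algebra.smul_def, map_pow] at hv
      exact ((hL.pow n).mul_right_eq_zero).1 hv
    have hN2inj : Function.Injective N2 := by
      rw [injective_iff_map_eq_zero]
      intro z hz
      obtain ⟨l, rfl⟩ := hΘ z
      rw [hinj l (congrArg Subtype.val hz), map_zero]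
    have hN2surj : Function.Surjective N2 := by
      rintro ⟨ψ, t, ht⟩
      set T := (hfin t).toFinset with hT
      have hc : ∀ p, ∃ c : L, c * algebraMap A L g ^ e p = 1 := fun p =>
        (hL.pow (e p)).exists_left_inv
      choose c hc using hc
      let l : S →₀ L := Finsupp.onFinset T
        (fun p => if p ∈ T then ψ ((1 : R ⊗[A] L) ⊗ₜ[R] b p) * c p else 0)
        (fun p hp => by by_contra h; simp [h] at hp)
      refine ⟨Θ l, Subtype.ext ?_⟩
      show N1 (Θ l) = ψ
      obtain ⟨ρ, hρ1, hρ2⟩ := exists_res A R M L (N1 (Θ l) - ψ)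
      rw [← sub_eq_zero]
      apply hρ2
      refine huniq L hLtf t ρ (kills_iff (I ^ t) ρ ?_) ?_
      · intro r hr m
        rw [hρ1, LinearMap.sub_apply, hΘev]
        have h1 : ψ ((1 : R ⊗[A] L) ⊗ₜ[R] (r • m)) = 0 := by
          rw [← TensorProduct.smul_tmul, ← algebraMap_smul (R ⊗[A] L) r (1 : R ⊗[A] L),
            ← TensorProduct.smul_tmul']
          apply ht
          rw [← Ideal.map_pow]
          exact Ideal.mem_map_of_mem _ hr
        rw [h1, sub_zero]
        refine Finset.sum_eq_zero (fun p hp => ?_)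
        have hpT : p ∈ T := Finsupp.support_onFinset_subset hp
        have hpt : deg p < t := (hfin t).mem_toFinset.1 hpT
        have h2 : φ p (r • m) = 0 := hkill p _ (Submodule.smul_mem_smul
          (Ideal.pow_le_pow_right hpt hr) Submodule.mem_top)
        show l p * algebraMap A L (φ p (r • m)) = 0
        rw [h2, map_zero, mul_zero]
      · intro q hq
        have hqT : q ∈ T := (hfin t).mem_toFinset.2 hq
        rw [hρ1, LinearMap.sub_apply, hΘb]
        have : l q = ψ ((1 : R ⊗[A] L) ⊗ₜ[R] b q) * c q := by
          simp [l, hqT]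
        rw [this, mul_assoc, hc, mul_one, sub_self]
    refine ⟨Module.Free.of_equiv (LinearEquiv.ofBijective Θ ⟨hΘinj, hΘ⟩),
      LinearEquiv.ofBijective N2 ⟨hN2inj, hN2surj⟩, ?_⟩
    intro ψ ℓ ℓ' r m
    show N1 (ℓ ⊗ₜ[A] ψ) _ = _
    rw [hN1, LinearMap.smul_apply, hN, smul_eq_mul, mul_smul_comm]
  exact ⟨g, hg0, (main (Localization.Away g)
    (IsLocalization.Away.algebraMap_isUnit g)).1, fun L _ _ hL => (main L hL).2⟩
end

section
/- Let A be a commutative Noetherian ring, let R = A[[x_1, ..., x_n]] be the power series ring over A, and let I = (x_1, ..., x_n) ⊆ R. Then there is an R-module isomorphism between the top local cohomology module H^n_I(R) and Hom_A^cts(R, A). -/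
variable {A : Type*} [CommRing A] {R : Type*} [CommRing R] [Algebra A R]
  {I : Ideal R} {M : Type*} [AddCommGroup M] [Module A M] [Module R M] [IsScalarTower A R M]

namespace LCAux
section Outer
open CategoryTheory Limits Opposite
section PartA
universe u
variable {S : Type} [CommRing S]

/-- cocycles -/
def ZZ {N : ModuleCat.{0} S} (P : ProjectiveResolution N) (Y : ModuleCat.{0} S) (n : ℕ) :
    Submodule S (P.complex.X n ⟶ Y) where
  carrier := {f | P.complex.d (n+1) n ≫ f = 0}
  add_mem' := by intro a b ha hb; simp only [Set.mem_ofPred_eq] at *; simp [ha, hb]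
  zero_mem' := by simp
  smul_mem' := by intro r a ha; simp only [Set.mem_ofPred_eq] at *; simp [ha]

lemma ZZ_d {N : ModuleCat.{0} S} {P : ProjectiveResolution N} {Y : ModuleCat.{0} S} {n : ℕ}
    (f : ZZ P Y n) : P.complex.d (n+1) n ≫ f.1 = 0 := f.2

lemma linYon_d {N : ModuleCat.{0} S} (P : ProjectiveResolution N) (Y : ModuleCat.{0} S) (i j : ℕ)
    (g : P.complex.X i ⟶ Y) :
    ((P.complex.linearYonedaObj S Y).d i j).hom g = P.complex.d j i ≫ g := by
  rfl

noncomputable def zcyc {N : ModuleCat.{0} S} (P : ProjectiveResolution N) (Y : ModuleCat.{0} S)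
    (n : ℕ) : ModuleCat.of S (ZZ P Y n) ⟶ (P.complex.linearYonedaObj S Y).cycles n :=
  (P.complex.linearYonedaObj S Y).liftCycles (ModuleCat.ofHom (ZZ P Y n).subtype) (n+1) (by simp)
    (by ext x; exact x.2)

lemma zcyc_i {N : ModuleCat.{0} S} (P : ProjectiveResolution N) (Y : ModuleCat.{0} S)
    (n : ℕ) (x : ZZ P Y n) : ((P.complex.linearYonedaObj S Y).iCycles n).hom ((zcyc P Y n).hom x)
      = x.1 := by
  have : zcyc P Y n ≫ (P.complex.linearYonedaObj S Y).iCycles n = 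
     (ModuleCat.ofHom (ZZ P Y n).subtype) := by
    unfold zcyc; exact HomologicalComplex.liftCycles_i _ _ _ _ _
  exact congrArg (fun f => f.hom x) this

lemma iCyc_inj {N : ModuleCat.{0} S} (P : ProjectiveResolution N) (Y : ModuleCat.{0} S)
    (n : ℕ) : Function.Injective ((P.complex.linearYonedaObj S Y).iCycles n).hom := by
  rw [← ModuleCat.mono_iff_injective]; infer_instance

lemma zcyc_surj {N : ModuleCat.{0} S} (P : ProjectiveResolution N) (Y : ModuleCat.{0} S)
    (n : ℕ) : Function.Surjective (zcyc P Y n).hom := by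
  intro c
  have h : (P.complex.linearYonedaObj S Y).iCycles n ≫ 
    (P.complex.linearYonedaObj S Y).d n (n+1) = 0 :=
      HomologicalComplex.iCycles_d _ _ _
  refine ⟨⟨((P.complex.linearYonedaObj S Y).iCycles n).hom c, ?_⟩, ?_⟩
  · exact congrArg (fun f => f.hom c) h
  · apply iCyc_inj
    rw [zcyc_i]

noncomputable def zhom {N : ModuleCat.{0} S} (P : ProjectiveResolution N) (Y : ModuleCat.{0} S)
    (n : ℕ) : ModuleCat.of S (ZZ P Y n) ⟶ (P.complex.linearYonedaObj S Y).homology n :=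
  zcyc P Y n ≫ (P.complex.linearYonedaObj S Y).homologyπ n

lemma zhom_surj {N : ModuleCat.{0} S} (P : ProjectiveResolution N) (Y : ModuleCat.{0} S)
    (n : ℕ) : Function.Surjective (zhom P Y n).hom := by
  have : Function.Surjective ((P.complex.linearYonedaObj S Y).homologyπ n).hom := by
    rw [← ModuleCat.epi_iff_surjective]; infer_instance
  simpa [zhom] using this.comp (zcyc_surj P Y n)

lemma zhom_eq_zero {N : ModuleCat.{0} S} (P : ProjectiveResolution N) (Y : ModuleCat.{0} S)
    (n i : ℕ) (hi : (ComplexShape.up ℕ).prev n = i) (x : ZZ P Y n) : (zhom P Y n).hom x = 0 ↔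
     ∃ g : P.complex.X i ⟶ Y, P.complex.d n i ≫ g = x.1 := by
  have ex := ShortComplex.exact_of_g_is_cokernel
    (ShortComplex.mk _ _ ((P.complex.linearYonedaObj S Y).toCycles_comp_homologyπ i n))
    ((P.complex.linearYonedaObj S Y).homologyIsCokernel i n hi)
  rw [ShortComplex.moduleCat_exact_iff] at ex
  have hc : ∀ g, ((P.complex.linearYonedaObj S Y).iCycles n).hom
      (((P.complex.linearYonedaObj S Y).toCycles i n).hom g) =
      ((P.complex.linearYonedaObj S Y).d i n).hom g := fun g => 
    congrArg (fun f => f.hom g) ((P.complex.linearYonedaObj S Y).toCycles_i i n)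
  constructor
  · intro h
    obtain ⟨g, hg⟩ := ex ((zcyc P Y n).hom x) h
    refine ⟨g, ?_⟩
    rw [← zcyc_i, ← hg]
    exact (hc g).symm
  · rintro ⟨g, hg⟩
    have : (zcyc P Y n).hom x = ((P.complex.linearYonedaObj S Y).toCycles i n).hom g := by
      apply iCyc_inj
      refine (zcyc_i P Y n x).trans (Eq.trans ?_ (hc g).symm)
      rw [← hg]; rfl
    change ((P.complex.linearYonedaObj S Y).homologyπ n).hom ((zcyc P Y n).hom x) = 0
    rw [this]
    exact congrArg (fun f => f.hom g) ((P.complex.linearYonedaObj S Y).toCycles_comp_homologyπ i n)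

/-- class in new Ext -/
noncomputable def znew {N : ModuleCat.{0} S} (P : ProjectiveResolution N) (Y : ModuleCat.{0} S)
    (n : ℕ) : ZZ P Y n →ₗ[S] Abelian.Ext.{0} N Y n where
  toFun f := P.extMk f.1 (n+1) rfl (ZZ_d f)
  map_add' f g := (P.add_extMk _ _ _ _ _ _).symm
  map_smul' r f := by
    rw [RingHom.id_apply, Abelian.Ext.smul_eq_comp_mk₀, P.extMk_comp_mk₀]
    congr 1

lemma znew_surj {N : ModuleCat.{0} S} (P : ProjectiveResolution N) (Y : ModuleCat.{0} S)
    (n : ℕ) : Function.Surjective (znew P Y n) := by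
  intro a
  obtain ⟨f, hf, h⟩ := P.extMk_surjective a (n+1) rfl
  exact ⟨⟨f, hf⟩, h⟩

lemma znew_eq_zero {N : ModuleCat.{0} S} (P : ProjectiveResolution N) (Y : ModuleCat.{0} S)
    (n i : ℕ) (hi : (ComplexShape.up ℕ).prev n = i) (x : ZZ P Y n) : znew P Y n x = 0 ↔
     ∃ g : P.complex.X i ⟶ Y, P.complex.d n i ≫ g = x.1 := by
  rcases n with _ | n
  · obtain rfl : i = 0 := by simpa using hi.symm
    change P.extMk x.1 (0+1) rfl (ZZ_d x) = 0 ↔ _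
    have hz : P.complex.d 0 0 = 0 := P.complex.shape _ _ (by simp)
    simp only [hz, zero_comp, exists_const]
    constructor
    · intro h
      rw [← P.extEquivCohomologyClass.apply_eq_iff_eq,
        ProjectiveResolution.extEquivCohomologyClass_extMk, ProjectiveResolution.extEquivCohomologyClass_zero,
        CochainComplex.HomComplex.CohomologyClass.mk_eq_zero_iff,
        CochainComplex.HomComplex.Cocycle.toSingleMk_mem_coboundaries_iff _ _ _ _ _ 1 (by simp)] at h
      obtain ⟨g, hg⟩ := h
      have hz : P.cochainComplex.d (-((0:ℕ):ℤ)) 1 = 0 := by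
        apply IsZero.eq_of_tgt
        exact P.cochainComplex.isZero_of_isStrictlyLE 0 1 (by simp)
      rw [hz, zero_comp] at hg
      rw [← cancel_epi (P.cochainComplexXIso (-((0:ℕ):ℤ)) 0 rfl).hom, ← hg]
      simp
    · intro h
      simp [← h]
  · obtain rfl : i = n := by simpa using hi.symm
    exact P.extMk_eq_zero_iff x.1 (i+1+1) rfl (ZZ_d x) i rfl

/-- class in old Ext -/
noncomputable def zold {N : ModuleCat.{0} S} (P : ProjectiveResolution N) (Y : ModuleCat.{0} S)
    (n : ℕ) : ModuleCat.of S (ZZ P Y n) ⟶ ((Ext S (ModuleCat.{0} S) n).obj (op N)).obj Y :=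
  zhom P Y n ≫ (P.isoExt n Y).inv

lemma zold_surj {N : ModuleCat.{0} S} (P : ProjectiveResolution N) (Y : ModuleCat.{0} S)
    (n : ℕ) : Function.Surjective (zold P Y n).hom := by
  have : Function.Surjective ((P.isoExt (R := S) n Y).inv).hom := by
    rw [← ModuleCat.epi_iff_surjective]; infer_instance
  simpa [zold] using this.comp (zhom_surj P Y n)

lemma zold_eq_zero {N : ModuleCat.{0} S} (P : ProjectiveResolution N) (Y : ModuleCat.{0} S)
    (n : ℕ) (x : ZZ P Y n) : (zold P Y n).hom x = 0 ↔ znew P Y n x = 0 := by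
  rw [znew_eq_zero P Y n _ rfl x, ← zhom_eq_zero P Y n _ rfl x]
  have : Function.Injective ((P.isoExt (R := S) n Y).inv).hom := by
    rw [← ModuleCat.mono_iff_injective]; infer_instance
  change ((P.isoExt (R := S) n Y).inv).hom ((zhom P Y n).hom x) = 0 ↔ _
  exact map_eq_zero_iff _ this

/-- comparison -/
lemma comparison_exists {N : ModuleCat.{0} S} (P : ProjectiveResolution N) (Y : ModuleCat.{0} S)
    (n : ℕ) : ∃ e : ((Ext S (ModuleCat.{0} S) n).obj (op N)).obj Y ≃ₗ[S] Abelian.Ext.{0} N Y n,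
      ∀ x, e ((zold P Y n).hom x) = znew P Y n x := by
  have hk : LinearMap.ker (zold P Y n).hom = LinearMap.ker (znew P Y n) := by
    ext x; exact zold_eq_zero P Y n x
  refine ⟨((zold P Y n).hom.quotKerEquivOfSurjective (zold_surj P Y n)).symm.trans
    ((Submodule.quotEquivOfEq _ _ hk).trans
    ((znew P Y n).quotKerEquivOfSurjective (znew_surj P Y n))), fun x => ?_⟩
  have : ((zold P Y n).hom.quotKerEquivOfSurjective (zold_surj P Y n)).symm ((zold P Y n).hom x)
    = Submodule.Quotient.mk x := by
    rw [LinearEquiv.symm_apply_eq]; rfl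
  simp only [LinearEquiv.trans_apply]
  rw [this]; rfl

noncomputable def cmp (N Y : ModuleCat.{0} S) (n : ℕ) :
    ((Ext S (ModuleCat.{0} S) n).obj (op N)).obj Y ≃ₗ[S] Abelian.Ext.{0} N Y n :=
  (comparison_exists (projectiveResolution N) Y n).choose

lemma cmp_zold (N Y : ModuleCat.{0} S) (n : ℕ) (x) : 
    cmp N Y n ((zold (projectiveResolution N) Y n).hom x) = znew (projectiveResolution N) Y n x :=
  (comparison_exists (projectiveResolution N) Y n).choose_spec x

/-- precomposition of cocycles with a chain map -/
noncomputable def zpre {N N' : ModuleCat.{0} S} {P : ProjectiveResolution N}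
    {P' : ProjectiveResolution N'} (φ : P.complex ⟶ P'.complex) (Y : ModuleCat.{0} S) (n : ℕ) :
    ZZ P' Y n →ₗ[S] ZZ P Y n where
  toFun f := ⟨φ.f n ≫ f.1, by
    change P.complex.d (n+1) n ≫ φ.f n ≫ f.1 = 0
    rw [← φ.comm_assoc, ZZ_d, comp_zero]⟩
  map_add' f g := by ext1; simp
  map_smul' r f := by ext1; simp

noncomputable def yonMap {N N' : ModuleCat.{0} S} {P : ProjectiveResolution N}
    {P' : ProjectiveResolution N'} (φ : P.complex ⟶ P'.complex) (Y : ModuleCat.{0} S) :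
    P'.complex.linearYonedaObj S Y ⟶ P.complex.linearYonedaObj S Y :=
  (HomologicalComplex.unopFunctor _ _).map
    ((((linearYoneda S (ModuleCat.{0} S)).obj Y).rightOp.mapHomologicalComplex _).map φ).op

lemma zhom_nat {N N' : ModuleCat.{0} S} {P : ProjectiveResolution N}
    {P' : ProjectiveResolution N'} (φ : P.complex ⟶ P'.complex) (Y : ModuleCat.{0} S) (n : ℕ) :
    zhom P' Y n ≫ HomologicalComplex.homologyMap (yonMap φ Y) n =
      ModuleCat.ofHom (zpre φ Y n) ≫ zhom P Y n := by
  have h : zcyc P' Y n ≫ HomologicalComplex.cyclesMap (yonMap φ Y) n =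
      ModuleCat.ofHom (zpre φ Y n) ≫ zcyc P Y n := by
    rw [← cancel_mono (HomologicalComplex.iCycles _ n), Category.assoc, Category.assoc,
      HomologicalComplex.cyclesMap_i]
    unfold zcyc
    erw [HomologicalComplex.liftCycles_i_assoc, HomologicalComplex.liftCycles_i]
    rfl
  unfold zhom
  rw [Category.assoc, HomologicalComplex.homologyπ_naturality, ← Category.assoc, h, Category.assoc]

lemma sq_paste {C : Type*} [Category* C] {X Y Z X' Y' Z' : C} {u : X ⟶ Y} {v : Y ⟶ Z}
    {w : Z ⟶ Z'} {u' : X' ⟶ Y'} {v' : Y' ⟶ Z'} {s : X ⟶ X'} {t : Y ⟶ Y'}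
    (h1 : v ≫ w = t ≫ v') (h2 : s ≫ u' = u ≫ t) : (u ≫ v) ≫ w = s ≫ (u' ≫ v') := by
  rw [Category.assoc, h1, ← Category.assoc, ← h2, Category.assoc]

lemma isoExt_nat {N N' : ModuleCat.{0} S} (P : ProjectiveResolution N)
    (P' : ProjectiveResolution N') (f : N ⟶ N') (φ : P.Hom P' f) (Y : ModuleCat.{0} S)
    (n : ℕ) :
    (P'.isoExt n Y).inv ≫ ((Ext S (ModuleCat.{0} S) n).map f.op).app Y =
      HomologicalComplex.homologyMap (yonMap φ.hom Y) n ≫ (P.isoExt n Y).inv := by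
  have h1 := ProjectiveResolution.isoLeftDerivedObj_hom_naturality f P P' φ.hom 
    (by simpa using φ.hom_f_zero_comp_π_f_zero) ((linearYoneda S (ModuleCat.{0} S)).obj Y).rightOp n
  have h2 := HomologicalComplex.homologyOp_hom_naturality (yonMap φ.hom Y) n
  exact sq_paste (congrArg Quiver.Hom.unop h1) (congrArg Quiver.Hom.unop h2).symm

lemma cmp_nat {N N' Y : ModuleCat.{0} S} (f : N ⟶ N') (n : ℕ)
    (y : ((Ext S (ModuleCat.{0} S) n).obj (op N')).obj Y) :
    cmp N Y n ((((Ext S (ModuleCat.{0} S) n).map f.op).app Y).hom y) = 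
      (Abelian.Ext.mk₀ f).comp (cmp N' Y n y) (zero_add n) := by
  obtain ⟨x, rfl⟩ := zold_surj (projectiveResolution N') Y n y
  let P := projectiveResolution N
  let P' := projectiveResolution N'
  let φ : P.Hom P' f := ⟨ProjectiveResolution.lift f P P', by
    rw [← HomologicalComplex.comp_f, ProjectiveResolution.lift_commutes,
      HomologicalComplex.comp_f]⟩
  have h : zold P' Y n ≫ ((Ext S (ModuleCat.{0} S) n).map f.op).app Y =
     ModuleCat.ofHom (zpre φ.hom Y n) ≫ zold P Y n := by
    unfold zold
    rw [Category.assoc, isoExt_nat P P' f φ, ← Category.assoc, zhom_nat, Category.assoc]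
  have h' : (((Ext S (ModuleCat.{0} S) n).map f.op).app Y).hom ((zold P' Y n).hom x) = 
    (zold P Y n).hom (zpre φ.hom Y n x) := congrArg (fun f => f.hom x) h
  rw [cmp_zold, h', cmp_zold]
  exact (ProjectiveResolution.mk₀_comp_extMk x.1 (n+1) rfl (ZZ_d x) φ).symm

end PartA

section PartB
open Abelian
variable {S : Type} [CommRing S]

lemma ext_vanish {N L : ModuleCat.{0} S} (r : S) (hN : ∀ x : N, r • x = 0)
    (hL : Function.Bijective (fun x : L => r • x)) (i : ℕ) (y : Ext.{0} N L i) : y = 0 := by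
  have h1 : r • y = 0 := by
    have h := Ext.smul_comp (R := S) (Ext.mk₀ (𝟙 N)) y (zero_add i) r
    rw [Ext.mk₀_id_comp] at h
    rw [← h, ← Ext.mk₀_smul]
    have : r • 𝟙 N = 0 := by ext x; exact hN x
    rw [this]; simp
  have hiso : IsIso (r • 𝟙 L) := by
    rw [ConcreteCategory.isIso_iff_bijective]
    exact hL
  rw [Ext.smul_eq_comp_mk₀] at h1
  have h2 := congrArg (fun z => Ext.comp z (Ext.mk₀ (inv (r • 𝟙 L))) (add_zero i)) h1
  simp only [Ext.zero_comp] at h2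
  rw [Ext.comp_assoc_of_third_deg_zero, Ext.mk₀_comp_mk₀, IsIso.hom_inv_id, Ext.comp_mk₀_id] at h2
  exact h2

lemma exists_class (n : ℕ) (Y : ModuleCat.{0} S) (M L : ℕ → ModuleCat.{0} S)
    (f : ∀ k, M k ⟶ L k) (g : ∀ k, L k ⟶ M (k+1)) (w : ∀ k, k < n → f k ≫ g k = 0)
    (hS : ∀ k (hk : k < n), (ShortComplex.mk (f k) (g k) (w k hk)).ShortExact) (e : M 0 ≅ Y)
    (Good : ModuleCat.{0} S → Prop)
    (hv : ∀ N, Good N → ∀ k < n, ∀ i, ∀ y : Ext.{0} N (L k) i, y = 0) :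
    ∃ α : Ext.{0} (M n) Y n, ∀ N, Good N →
      Function.Bijective (fun φ : N ⟶ M n => (Ext.mk₀ φ).comp α (zero_add n)) := by
  suffices H : ∀ k ≤ n, ∃ α : Ext.{0} (M k) Y k, ∀ N, Good N → ∀ i j (h : i + k = j),
      Function.Bijective (fun x : Ext.{0} N (M k) i => x.comp α h) by
    obtain ⟨α, hα⟩ := H n le_rfl
    exact ⟨α, fun N hN => (hα N hN 0 n (zero_add n)).comp (Ext.mk₀_bijective N (M n))⟩
  intro k
  induction k with
  | zero =>
    intro _
    refine ⟨Ext.mk₀ e.hom, fun N hN i j h => ?_⟩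
    obtain rfl : i = j := h
    refine Function.bijective_iff_has_inverse.mpr
      ⟨fun x => x.comp (Ext.mk₀ e.inv) (add_zero i), fun x => ?_, fun x => ?_⟩
    · simp
    · simp
  | succ k ih =>
    intro hk
    obtain ⟨α, hα⟩ := ih (by lia)
    have hs := hS k (by lia)
    refine ⟨hs.extClass.comp α (add_comm 1 k), fun N hN i j h => ?_⟩
    have hb : Function.Bijective (fun x : Ext.{0} N (M (k+1)) i => x.comp hs.extClass rfl) := by
      constructor
      · have : Function.Injective (AddMonoidHom.mk' (fun x : Ext.{0} N (M (k+1)) i =>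
            x.comp hs.extClass rfl) (fun a b => Ext.add_comp _ _ _ _)) := by
          rw [injective_iff_map_eq_zero]
          intro x hx
          obtain ⟨y, hy⟩ := Ext.covariant_sequence_exact₃ N hs x rfl hx
          rw [← hy]
          have := hv N hN k (by lia) i y
          subst this
          simp
        exact this
      · intro y
        obtain ⟨x, hx⟩ := Ext.covariant_sequence_exact₁ N hs y (hv N hN k (by lia) _ _) rfl
        exact ⟨x, hx⟩
    have := (hα N hN (i+1) j (by lia)).comp hb
    convert this using 1
    ext x
    exact (Ext.comp_assoc x hs.extClass α rfl (add_comm 1 k) (by lia)).symm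

end PartB

section PartD
open Abelian
variable {S : Type} [CommRing S]

lemma colim_equiv (n : ℕ) (I : Ideal S) (Y E : ModuleCat.{0} S) (α : Ext.{0} E Y n)
    (hα : ∀ t : ℕ, Function.Bijective (fun φ : ModuleCat.of S (S ⧸ I ^ t) ⟶ E =>
      (Ext.mk₀ φ).comp α (zero_add n)))
    (hE : ∀ e : E, ∃ t : ℕ, ∀ r ∈ I ^ t, r • e = 0) :
    Nonempty ((localCohomology I n).obj Y ≃ₗ[S] E) := by
  let Dg := localCohomology.diagram (localCohomology.idealPowersDiagram I) n
  have e0 : (localCohomology I n).obj Y ≅ colimit (Dg ⋙ (evaluation _ _).obj Y) :=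
    (colimitObjIsoColimitCompEvaluation Dg Y)
  let F := Dg ⋙ (evaluation _ _).obj Y
  let ψ (t : ℕ) : (ModuleCat.of S (S ⧸ I ^ t) ⟶ E) ≃ₗ[S] Ext.{0} (ModuleCat.of S (S ⧸ I ^ t)) Y n :=
    LinearEquiv.ofBijective
      { toFun := fun φ => (Ext.mk₀ φ).comp α (zero_add n)
        map_add' := fun a b => by rw [Ext.mk₀_add, Ext.add_comp]
        map_smul' := fun r a => by rw [Ext.mk₀_smul, Ext.smul_comp]; rfl } (hα t)
  let ev (t : ℕ) : (ModuleCat.of S (S ⧸ I ^ t) ⟶ E) →ₗ[S] E :=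
    { toFun := fun φ => φ.hom (Submodule.Quotient.mk 1)
      map_add' := fun a b => rfl
      map_smul' := fun r a => rfl }
  have ev_inj (t : ℕ) : Function.Injective (ev t) := by
    intro a b h
    ext
    exact h
  let leg (t : ℕ) : F.obj (op (op t)) →ₗ[S] E :=
    (ev t).comp ((ψ t).symm.toLinearMap.comp (cmp (ModuleCat.of S (S ⧸ I ^ t)) Y n).toLinearMap)
  have leg_inj (t : ℕ) : Function.Injective (leg t) :=
    (ev_inj t).comp ((ψ t).symm.injective.comp (cmp (ModuleCat.of S (S ⧸ I ^ t)) Y n).injective)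
  have leg_nat (t t' : (ℕᵒᵖ)ᵒᵖ) (h : t ⟶ t') (y : F.obj t) :
      leg t'.unop.unop ((F.map h).hom y) = leg t.unop.unop y := by
    let q : ModuleCat.of S (S ⧸ I ^ t'.unop.unop) ⟶ ModuleCat.of S (S ⧸ I ^ t.unop.unop) :=
      (localCohomology.ringModIdeals (localCohomology.idealPowersDiagram I)).map h.unop
    have h1 := cmp_nat q n y
    obtain ⟨φ, hφ⟩ := (ψ t.unop.unop).surjective (cmp (ModuleCat.of S (S ⧸ I ^ t.unop.unop)) Y n y)
    have h2 : ψ t'.unop.unop (q ≫ φ) = cmp (ModuleCat.of S (S ⧸ I ^ t'.unop.unop)) Y n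
        ((F.map h).hom y) := by
      refine Eq.trans ?_ h1.symm
      rw [← hφ]
      change (Ext.mk₀ (q ≫ φ)).comp α (zero_add n) =
        (Ext.mk₀ q).comp ((Ext.mk₀ φ).comp α (zero_add n)) (zero_add n)
      rw [Ext.mk₀_comp_mk₀_assoc]
    change ev _ ((ψ _).symm (cmp (ModuleCat.of S (S ⧸ I ^ t'.unop.unop)) Y n ((F.map h).hom y)))
      = ev _ ((ψ _).symm (cmp (ModuleCat.of S (S ⧸ I ^ t.unop.unop)) Y n y))
    rw [← h2, ← hφ, LinearEquiv.symm_apply_apply, LinearEquiv.symm_apply_apply]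
    rfl
  let c : Cocone F :=
    { pt := E
      ι :=
        { app := fun t => ModuleCat.ofHom (leg t.unop.unop)
          naturality := by
            intro t t' h
            ext y
            exact leg_nat t t' h y } }
  have hd (t) (y : F.obj t) : (colimit.desc F c).hom ((colimit.ι F t).hom y) =
      leg t.unop.unop y := congrArg (fun f => f.hom y) (colimit.ι_desc c t)
  have hbij : Function.Bijective (colimit.desc F c).hom := by
    constructor
    · rw [injective_iff_map_eq_zero]
      intro x hx
      obtain ⟨t, y, rfl⟩ := Concrete.colimit_exists_rep F x
      have h1 : leg t.unop.unop y = 0 := (hd t y).symm.trans hx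
      have : y = 0 := leg_inj _ (h1.trans (map_zero _).symm)
      rw [this, map_zero]
    · intro e
      obtain ⟨t, ht⟩ := hE e
      let φ : ModuleCat.of S (S ⧸ I ^ t) ⟶ E := ModuleCat.ofHom
        (Submodule.liftQ (I ^ t) (LinearMap.toSpanSingleton S E e) (fun r hr => ht r hr))
      have hφ : ev t φ = e := one_smul S e
      let y : F.obj (op (op t)) := (cmp (ModuleCat.of S (S ⧸ I ^ t)) Y n).symm (ψ t φ)
      refine ⟨(colimit.ι F (op (op t))).hom y, (hd _ y).trans ?_⟩
      change ev t ((ψ t).symm ((cmp (ModuleCat.of S (S ⧸ I ^ t)) Y n) y)) = e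
      rw [LinearEquiv.apply_symm_apply, LinearEquiv.symm_apply_apply, hφ]
  exact ⟨e0.toLinearEquiv.trans (LinearEquiv.ofBijective _ hbij)⟩
end PartD

end Outer
end LCAux

namespace LCAux
section PartC
variable (n : ℕ) (B : Type) [CommRing B]

def KK : Type := HahnSeries (Fin n → ℤ) B

noncomputable instance : CommRing (KK n B) := inferInstanceAs (CommRing (HahnSeries (Fin n → ℤ) B))

def kemb : (Fin n →₀ ℕ) →+ (Fin n → ℤ) where
  toFun m := fun i => (m i : ℤ)
  map_zero' := by ext; simp
  map_add' a b := by ext; simp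

lemma kemb_inj : Function.Injective (kemb n) := by
  intro a b h
  ext i
  have := congrFun h i
  simpa [kemb] using this

lemma kemb_le (a b : Fin n →₀ ℕ) : kemb n a ≤ kemb n b ↔ a ≤ b := by
  simp [kemb, Pi.le_def, Finsupp.le_def]

noncomputable def kι : MvPowerSeries (Fin n) B →+* KK n B :=
  (HahnSeries.embDomainRingHom (kemb n) (kemb_inj n) (kemb_le n)).comp
    (HahnSeries.toMvPowerSeries (R := B) (σ := Fin n)).symm.toRingHom

variable {n B}

def kc (f : KK n B) (a : Fin n → ℤ) : B := HahnSeries.coeff f a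

lemma kc_ext {f g : KK n B} (h : ∀ a, kc f a = kc g a) : f = g :=
  HahnSeries.ext (funext h)

@[simp] lemma kc_add (f g : KK n B) (a) : kc (f + g) a = kc f a + kc g a := rfl
@[simp] lemma kc_zero (a) : kc (0 : KK n B) a = 0 := rfl
@[simp] lemma kc_sub (f g : KK n B) (a) : kc (f - g) a = kc f a - kc g a := rfl

noncomputable def ks (b : Fin n → ℤ) (c : B) : KK n B := HahnSeries.single b c

lemma kc_ks_mul (b : Fin n → ℤ) (c : B) (f : KK n B) (a) : kc (ks b c * f) a = c * kc f (a - b) :=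
  HahnSeries.coeff_single_mul

lemma kc_ι_emb (r : MvPowerSeries (Fin n) B) (m : Fin n →₀ ℕ) :
    kc (kι n B r) (kemb n m) = MvPowerSeries.coeff m r :=
  HahnSeries.embDomain_coeff (f := ⟨⟨kemb n, kemb_inj n⟩, kemb_le n _ _⟩)

lemma kc_ι_ne (r : MvPowerSeries (Fin n) B) (a) (h : kc (kι n B r) a ≠ 0) :
    ∃ m, kemb n m = a := by
  by_contra hc
  exact h (HahnSeries.embDomain_of_notMem_range (f := ⟨⟨kemb n, kemb_inj n⟩, kemb_le n _ _⟩)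
    (fun ⟨m, hm⟩ => hc ⟨m, hm⟩))

lemma kι_monomial (m : Fin n →₀ ℕ) (b : B) : kι n B (MvPowerSeries.monomial m b) = ks (kemb n m) b := by
  classical
  apply kc_ext
  intro a
  by_cases h : ∃ m', kemb n m' = a
  · obtain ⟨m', rfl⟩ := h
    rw [kc_ι_emb, MvPowerSeries.coeff_monomial]
    change _ = (HahnSeries.single _ _).coeff _
    rw [HahnSeries.coeff_single]
    simp only [(kemb_inj n).eq_iff]
  · have h1 : kc (kι n B (MvPowerSeries.monomial m b)) a = 0 := by
      by_contra hc; exact h (kc_ι_ne _ _ hc)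
    rw [h1]
    symm
    apply HahnSeries.coeff_single_of_ne
    rintro rfl
    exact h ⟨m, rfl⟩

noncomputable instance : Module (MvPowerSeries (Fin n) B) (KK n B) := Module.compHom _ (kι n B)

lemma k_smul (r : MvPowerSeries (Fin n) B) (f : KK n B) : r • f = kι n B r * f := rfl

lemma kc_smul_ne {r : MvPowerSeries (Fin n) B} {f : KK n B} {a} (h : kc (r • f) a ≠ 0) :
    ∃ b, kc f b ≠ 0 ∧ b ≤ a := by
  have := HahnSeries.support_mul_subset (x := kι n B r) (y := f) (a := a) h
  obtain ⟨c, hc, b, hb, rfl⟩ := Set.mem_add.mp this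
  obtain ⟨m, rfl⟩ := kc_ι_ne r c hc
  refine ⟨b, hb, fun i => ?_⟩
  simp [kemb]

lemma kι_inj : Function.Injective (kι n B) := by
  intro a b h
  ext m
  rw [← kc_ι_emb, h, kc_ι_emb]

/-- series supported in an upper set -/
noncomputable def KU (U : UpperSet (Fin n → ℤ)) : Submodule (MvPowerSeries (Fin n) B) (KK n B) where
  carrier := {f | ∀ a, kc f a ≠ 0 → a ∈ U}
  add_mem' := by
    intro f g hf hg a h
    by_cases h1 : kc f a = 0
    · exact hg a (fun h2 => h (by simp [h1, h2]))
    · exact hf a h1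
  zero_mem' := by intro a h; simp at h
  smul_mem' := by
    intro r f hf a h
    obtain ⟨b, hb, hba⟩ := kc_smul_ne h
    exact U.upper hba (hf b hb)

lemma mem_KU {U : UpperSet (Fin n → ℤ)} {f : KK n B} : f ∈ KU U ↔ ∀ a, kc f a ≠ 0 → a ∈ U := Iff.rfl

lemma ks_mul_mem {U : UpperSet (Fin n → ℤ)} {f : KK n B} (hf : f ∈ KU U) (b : Fin n → ℤ)
    (hb : ∀ a ∈ U, a + b ∈ U) : ks b 1 * f ∈ KU U := by
  intro a ha
  rw [kc_ks_mul, one_mul] at ha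
  simpa using hb _ (hf _ ha)

lemma ks_mul_ks (b c : Fin n → ℤ) : ks (B := B) b 1 * ks c 1 = ks (b + c) 1 := by
  have : (HahnSeries.single b (1:B)) * HahnSeries.single c 1 = HahnSeries.single (b+c) 1 := by simp
  exact this

lemma ks_zero : ks (B := B) (0 : Fin n → ℤ) 1 = 1 := rfl

variable (n) in
def UU (k : ℕ) : UpperSet (Fin n → ℤ) :=
  ⟨{a | ∀ i : Fin n, k ≤ i → 0 ≤ a i}, fun _ _ h ha i hi => (ha i hi).trans (h i)⟩

variable (n) in
def WW (k : ℕ) : UpperSet (Fin n → ℤ) :=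
  ⟨{a | ∃ i : Fin n, (i : ℕ) < k ∧ 0 ≤ a i}, fun _ _ h ⟨i, hi, ha⟩ => ⟨i, hi, ha.trans (h i)⟩⟩

lemma mem_UU {k : ℕ} {a : Fin n → ℤ} : a ∈ UU n k ↔ ∀ i : Fin n, k ≤ i → 0 ≤ a i := Iff.rfl
lemma mem_WW {k : ℕ} {a : Fin n → ℤ} : a ∈ WW n k ↔ ∃ i : Fin n, (i : ℕ) < k ∧ 0 ≤ a i := Iff.rfl

variable (B) in
noncomputable abbrev QQ (U W : UpperSet (Fin n → ℤ)) : Type :=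
  (KU (B := B) U) ⧸ (Submodule.comap (KU (B := B) U).subtype (KU W))

lemma QQ_mk_zero {U W : UpperSet (Fin n → ℤ)} (f : KU (B := B) U) :
    (Submodule.Quotient.mk f : QQ B U W) = 0 ↔ f.1 ∈ KU W := by
  rw [Submodule.Quotient.mk_eq_zero]; rfl

noncomputable def qmap {U W U' W' : UpperSet (Fin n → ℤ)} (h : KU (B := B) U ≤ KU U') 
    (h' : KU (B := B) W ≤ KU W') : QQ B U W →ₗ[MvPowerSeries (Fin n) B] QQ B U' W' :=
  Submodule.mapQ _ _ (Submodule.inclusion h) (fun _ hx => h' hx)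

lemma KU_UU_le (k : ℕ) : KU (B := B) (UU n k) ≤ KU (UU n (k+1)) :=
  fun _ hf a ha i hi => hf a ha i (by lia)
lemma KU_WW_le (k : ℕ) : KU (B := B) (WW n k) ≤ KU (WW n (k+1)) :=
  fun _ hf a ha => let ⟨i, hi, h⟩ := hf a ha; ⟨i, by lia, h⟩

variable (B) in
noncomputable def qf (k : ℕ) : QQ B (UU n k) (WW n k) →ₗ[MvPowerSeries (Fin n) B] 
    QQ B (UU n (k+1)) (WW n k) := qmap (KU_UU_le k) le_rfl
variable (B) in
noncomputable def qg (k : ℕ) : QQ B (UU n (k+1)) (WW n k) →ₗ[MvPowerSeries (Fin n) B] 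
    QQ B (UU n (k+1)) (WW n (k+1)) := qmap le_rfl (KU_WW_le k)

lemma qf_inj (k : ℕ) : Function.Injective (qf (n := n) B k) := by
  rw [injective_iff_map_eq_zero]
  intro x hx
  obtain ⟨f, rfl⟩ := Submodule.Quotient.mk_surjective _ x
  exact (QQ_mk_zero _).mpr ((QQ_mk_zero (W := WW n k) ⟨f.1, KU_UU_le k f.2⟩).mp hx)

lemma qg_surj (k : ℕ) : Function.Surjective (qg (n := n) B k) := by
  intro x
  obtain ⟨f, rfl⟩ := Submodule.Quotient.mk_surjective _ x
  exact ⟨Submodule.Quotient.mk f, rfl⟩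

lemma qfg (k : ℕ) (hk : k < n) (x) : qg (n := n) B k (qf B k x) = 0 := by
  obtain ⟨f, rfl⟩ := Submodule.Quotient.mk_surjective _ x
  exact (QQ_mk_zero (U := UU n (k+1)) (W := WW n (k+1)) ⟨f.1, KU_UU_le k f.2⟩).mpr 
    (fun a ha => ⟨⟨k, hk⟩, by simp, f.2 a ha ⟨k, hk⟩ le_rfl⟩)

open Classical in
/-- restriction of support -/
noncomputable def kres (f : KK n B) (T : Set (Fin n → ℤ)) : KK n B :=
  (⟨fun a => if a ∈ T then kc f a else 0, f.isPWO_support.mono (by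
    intro a ha h
    apply ha
    change (if a ∈ T then kc f a else 0) = 0
    split_ifs
    · exact h
    · rfl)⟩ : HahnSeries (Fin n → ℤ) B)

open Classical in
lemma kc_kres (f : KK n B) (T : Set (Fin n → ℤ)) (a) :
    kc (kres f T) a = if a ∈ T then kc f a else 0 := rfl

lemma q_exact (k : ℕ) (x) (hx : qg (n := n) B k x = 0) :
    ∃ y, qf B k y = x := by
  obtain ⟨f, rfl⟩ := Submodule.Quotient.mk_surjective _ x
  have hf := (QQ_mk_zero (U := UU n (k+1)) (W := WW n (k+1)) f).mp hx
  let T : Set (Fin n → ℤ) := {a | a ∉ WW n k}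
  have h1 : kres f.1 T ∈ KU (UU n k) := by
    intro a ha i hi
    rw [kc_kres] at ha
    split_ifs at ha with hT
    · rcases Nat.lt_or_ge k i with h | h
      · exact f.2 a ha i h
      · obtain ⟨j, hj, hja⟩ := hf a ha
        have : j = i := by
          by_contra hc
          apply hT
          refine ⟨j, ?_, hja⟩
          have : (j : ℕ) ≠ i := fun h => hc (Fin.ext h)
          lia
        rwa [← this]
    · exact absurd rfl ha
  refine ⟨Submodule.Quotient.mk ⟨kres f.1 T, h1⟩, ?_⟩
  refine (Submodule.Quotient.eq _).mpr ?_
  intro a ha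
  change kc (kres f.1 T - f.1) a ≠ 0 at ha
  by_contra hc
  apply ha
  rw [kc_sub, kc_kres, if_pos (show a ∈ T from hc), sub_self]

lemma kι_X_pow (i : Fin n) (t : ℕ) :
    kι n B (MvPowerSeries.X i ^ t) = ks (Pi.single i (t : ℤ)) 1 := by
  rw [MvPowerSeries.X_pow_eq, kι_monomial]
  congr 1
  ext j
  by_cases h : i = j
  · subst h; simp [kemb]
  · simp [kemb, Ne.symm h, Finsupp.single_apply, h]

lemma q_bij (k : ℕ) (hk : k < n) (t : ℕ) :
    Function.Bijective (fun x : QQ B (UU n (k+1)) (WW n k) =>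
      (MvPowerSeries.X ⟨k, hk⟩ ^ t : MvPowerSeries (Fin n) B) • x) := by
  set r : MvPowerSeries (Fin n) B := MvPowerSeries.X ⟨k, hk⟩ ^ t with hr
  set b : Fin n → ℤ := Pi.single ⟨k, hk⟩ (t : ℤ) with hb
  have hbi : ∀ i : Fin n, (i : ℕ) ≠ k → b i = 0 := by
    intro i hi
    rw [hb, Pi.single_eq_of_ne]
    intro h; exact hi (by rw [h])
  have hU : ∀ a ∈ UU n (k+1), a + -b ∈ UU n (k+1) := by
    intro a ha i hi
    have := ha i hi
    simpa [hbi i (by lia)] using this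
  have hW : ∀ a ∈ WW n k, a + -b ∈ WW n k := by
    rintro a ⟨i, hi, h⟩
    exact ⟨i, hi, by simpa [hbi i (by lia)] using h⟩
  have hrs : ∀ f : KK n B, r • f = ks b 1 * f := fun f => by rw [k_smul, hr, kι_X_pow]
  constructor
  · have : Function.Injective (LinearMap.lsmul (MvPowerSeries (Fin n) B) 
        (QQ B (UU n (k+1)) (WW n k)) r) := by
      rw [injective_iff_map_eq_zero]
      intro x hx
      obtain ⟨f, rfl⟩ := Submodule.Quotient.mk_surjective _ x
      have h := (QQ_mk_zero (r • f)).mp hx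
      have h2 := ks_mul_mem h (-b) hW
      have h3 : ks (-b) 1 * ((r • f : KU (B := B) (UU n (k+1))) : KK n B) = f.1 := by
        change ks (-b) 1 * (r • f.1) = f.1
        rw [hrs, ← mul_assoc, ks_mul_ks, neg_add_cancel, ks_zero, one_mul]
      rw [h3] at h2
      exact (QQ_mk_zero _).mpr h2
    exact this
  · intro x
    obtain ⟨f, rfl⟩ := Submodule.Quotient.mk_surjective _ x
    refine ⟨Submodule.Quotient.mk ⟨ks (-b) 1 * f.1, ks_mul_mem f.2 _ hU⟩, ?_⟩
    change Submodule.Quotient.mk (r • _) = _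
    congr 1
    ext1
    change r • (ks (-b) 1 * f.1) = f.1
    rw [hrs, ← mul_assoc, ks_mul_ks, add_neg_cancel, ks_zero, one_mul]

lemma q_zero_equiv : Nonempty (QQ B (UU n 0) (WW n 0) ≃ₗ[MvPowerSeries (Fin n) B] 
    MvPowerSeries (Fin n) B) := by
  let F : MvPowerSeries (Fin n) B →ₗ[MvPowerSeries (Fin n) B] QQ B (UU n 0) (WW n 0) :=
    { toFun := fun r => Submodule.Quotient.mk ⟨kι n B r, fun a ha i _ => by
        obtain ⟨m, rfl⟩ := kc_ι_ne r a ha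
        simp [kemb]⟩
      map_add' := fun r s => by
        rw [← Submodule.Quotient.mk_add]; congr 1; ext1; exact map_add _ _ _
      map_smul' := fun r s => by
        rw [RingHom.id_apply, ← Submodule.Quotient.mk_smul]; congr 1; ext1; exact map_mul _ _ _ }
  refine ⟨(LinearEquiv.ofBijective F ⟨?_, ?_⟩).symm⟩
  · rw [injective_iff_map_eq_zero]
    intro r hr
    have := (QQ_mk_zero (W := WW n 0) _).mp hr
    apply kι_inj
    rw [map_zero]
    apply kc_ext
    intro a
    by_contra hc
    obtain ⟨i, hi, _⟩ := this a hc
    lia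
  · intro x
    obtain ⟨f, rfl⟩ := Submodule.Quotient.mk_surjective _ x
    let r : MvPowerSeries (Fin n) B := fun m => kc f.1 (kemb n m)
    refine ⟨r, ?_⟩
    change Submodule.Quotient.mk _ = _
    congr 1
    ext1
    change kι n B r = f.1
    apply kc_ext
    intro a
    by_cases h : ∃ m, kemb n m = a
    · obtain ⟨m, rfl⟩ := h
      rw [kc_ι_emb]; rfl
    · have h1 : kc (kι n B r) a = 0 := by
        by_contra hc; exact h (kc_ι_ne _ _ hc)
      rw [h1]
      by_contra hc
      have := f.2 a (Ne.symm hc)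
      apply h
      refine ⟨Finsupp.equivFunOnFinite.symm (fun i => (a i).toNat), ?_⟩
      ext i
      have := this i (Nat.zero_le _)
      simp [kemb, this]

end PartC
end LCAux

namespace LCAux
section PartE
variable {n : ℕ} {B : Type} [CommRing B]

lemma k_torsion (f : KK n B) : ∃ t : ℕ, ∀ r ∈ (Ideal.span (Set.range
    (MvPowerSeries.X : Fin n → MvPowerSeries (Fin n) B))) ^ t, r • f ∈ KU (WW n n) := by
  let J : Ideal (MvPowerSeries (Fin n) B) :=
    Submodule.comap (LinearMap.toSpanSingleton (MvPowerSeries (Fin n) B) (KK n B) f) (KU (WW n n))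
  have hJ : ∀ r, r ∈ J ↔ r • f ∈ KU (WW n n) := fun r => Iff.rfl
  have hle : Ideal.span (Set.range
    (MvPowerSeries.X : Fin n → MvPowerSeries (Fin n) B)) ≤ J.radical := by
    rw [Ideal.span_le]
    rintro _ ⟨i, rfl⟩
    have hb : ∃ z : ℤ, ∀ a, kc f a ≠ 0 → z ≤ a i := by
      have h1 : (HahnSeries.support (Γ := Fin n → ℤ) (R := B) f).IsPWO := HahnSeries.isPWO_support f
      have h2 := (h1.image_of_monotone (f := fun a : Fin n → ℤ => a i) (fun a b h => h i)).isWF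
      by_cases hne : ((fun a : Fin n → ℤ => a i) '' (HahnSeries.support (Γ := Fin n → ℤ) (R := B) f)).Nonempty
      · refine ⟨h2.min hne, fun a ha => h2.min_le hne ⟨a, ha, rfl⟩⟩
      · refine ⟨0, fun a ha => (hne ⟨a i, a, ha, rfl⟩).elim⟩
    obtain ⟨z, hz⟩ := hb
    refine ⟨(-z).toNat, ?_⟩
    rw [hJ, k_smul, kι_X_pow]
    intro a ha
    rw [kc_ks_mul, one_mul] at ha
    have := hz _ ha
    refine ⟨i, i.2, ?_⟩
    simp at this
    have := Int.self_le_toNat (-z)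
    lia
  obtain ⟨t, ht⟩ := Ideal.exists_pow_le_of_le_radical_of_fg hle
    ((Submodule.fg_span (Set.finite_range _)))
  exact ⟨t, fun r hr => (hJ r).mp (ht hr)⟩

lemma mem_pow_of_coeff (t : ℕ) (s : Finset (Fin n)) (r : MvPowerSeries (Fin n) B)
    (h : ∀ m : Fin n →₀ ℕ, (∀ i ∈ s, m i < t) → MvPowerSeries.coeff m r = 0) :
    r ∈ (Ideal.span (Set.range
    (MvPowerSeries.X : Fin n → MvPowerSeries (Fin n) B))) ^ t := by
  classical
  induction s using Finset.induction_on generalizing r with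
  | empty =>
    have : r = 0 := by
      ext m; simpa using h m (by simp)
    rw [this]; exact zero_mem _
  | insert a s ha ih =>
    let p : MvPowerSeries (Fin n) B := fun m => if t ≤ m a then MvPowerSeries.coeff m r else 0
    have hp : ∀ m, MvPowerSeries.coeff m p = if t ≤ m a then MvPowerSeries.coeff m r else 0 :=
      fun m => rfl
    have h1 : (MvPowerSeries.X a : MvPowerSeries (Fin n) B) ^ t ∣ p := by
      rw [MvPowerSeries.X_pow_dvd_iff]
      intro m hm
      rw [hp, if_neg (by lia)]
    have h2 : p ∈ (Ideal.span (Set.range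
        (MvPowerSeries.X : Fin n → MvPowerSeries (Fin n) B))) ^ t := by
      obtain ⟨q, hq⟩ := h1
      rw [hq]
      exact Ideal.mul_mem_right _ _ (Ideal.pow_mem_pow (Ideal.subset_span (Set.mem_range_self a)) t)
    have h3 := ih (r - p) (by
      intro m hm
      rw [map_sub, hp]
      split_ifs with hta
      · simp
      · rw [sub_zero]
        apply h
        intro i hi
        rcases Finset.mem_insert.mp hi with rfl | hi
        · lia
        · exact hm i hi)
    simpa using add_mem h3 h2

lemma cd_zero (I : Ideal (MvPowerSeries (Fin n) B))
    (hI : I = Ideal.span (Set.range (MvPowerSeries.X : Fin n → MvPowerSeries (Fin n) B)))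
    (δ : ContinuousDual B (MvPowerSeries (Fin n) B) I (MvPowerSeries (Fin n) B))
    (h : ∀ m, δ.1 (MvPowerSeries.monomial m 1) = 0) : δ = 0 := by
  classical
  obtain ⟨t, ht⟩ := δ.2
  ext r
  change δ.1 r = 0
  let T : Finset (Fin n →₀ ℕ) := (Finset.univ (α := Fin n → Fin t)).image
    (fun v => Finsupp.equivFunOnFinite.symm (fun i => (v i : ℕ)))
  have hT : ∀ m : Fin n →₀ ℕ, (∀ i, m i < t) → m ∈ T := by
    intro m hm
    refine Finset.mem_image.mpr ⟨fun i => ⟨m i, hm i⟩, Finset.mem_univ _, ?_⟩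
    ext i; simp
  let q : MvPowerSeries (Fin n) B := ∑ m ∈ T, MvPowerSeries.monomial m (MvPowerSeries.coeff m r)
  have hq : δ.1 q = 0 := by
    rw [map_sum]
    apply Finset.sum_eq_zero
    intro m _
    have : MvPowerSeries.monomial m (MvPowerSeries.coeff m r) =
        (MvPowerSeries.coeff m r) • (MvPowerSeries.monomial m (1 : B)) := by
      rw [← map_smul, smul_eq_mul, mul_one]
    rw [this, map_smul, h, smul_zero]
  have h2 : r - q ∈ I ^ t := by
    rw [hI]
    apply mem_pow_of_coeff t Finset.univ
    intro m hm
    have hm := hT m (fun i => hm i (Finset.mem_univ i))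
    rw [map_sub, map_sum, Finset.sum_eq_single m]
    · simp
    · intro b _ hb
      rw [MvPowerSeries.coeff_monomial, if_neg (Ne.symm hb)]
    · intro h; exact (h hm).elim
  have h3 := ht _ h2 1
  rw [smul_eq_mul, mul_one, map_sub, hq, sub_zero] at h3
  exact h3

lemma kc_bsmul (b : B) (r : MvPowerSeries (Fin n) B) (f : KK n B) (a) :
    kc ((b • r) • f) a = b * kc (r • f) a := by
  rw [MvPowerSeries.smul_eq_C_mul, mul_smul, k_smul (MvPowerSeries.C b)]
  have : kι n B (MvPowerSeries.C b) = ks 0 b := by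
    have := kι_monomial (n := n) 0 b
    rw [map_zero] at this
    exact this
  rw [this, kc_ks_mul, sub_zero]

lemma not_mem_WW : (fun _ => -1 : Fin n → ℤ) ∉ WW n n := by
  rintro ⟨i, _, h⟩
  norm_num at h

noncomputable def cdMap (I : Ideal (MvPowerSeries (Fin n) B))
    (hI : I = Ideal.span (Set.range (MvPowerSeries.X : Fin n → MvPowerSeries (Fin n) B))) :
    KK n B →ₗ[MvPowerSeries (Fin n) B]
      ContinuousDual B (MvPowerSeries (Fin n) B) I (MvPowerSeries (Fin n) B) where
  toFun f := ⟨{ toFun := fun r => kc (r • f) (fun _ => -1)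
                map_add' := fun r s => by rw [add_smul, kc_add]
                map_smul' := fun b r => by rw [kc_bsmul]; rfl }, by
    obtain ⟨t, ht⟩ := k_torsion f
    refine ⟨t, fun r hr m => ?_⟩
    change kc ((r • m) • f) _ = 0
    by_contra hc
    refine not_mem_WW (ht (r • m) ?_ _ hc)
    rw [← hI]
    exact Ideal.mul_mem_right _ _ hr⟩
  map_add' f g := by
    ext r
    change kc (r • (f + g)) _ = kc (r • f) _ + kc (r • g) _
    rw [smul_add, kc_add]
  map_smul' s f := by
    ext r
    change kc (r • s • f) _ = kc ((s • r) • f) _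
    rw [smul_eq_mul, mul_comm, mul_smul]

lemma cdMap_apply (I : Ideal (MvPowerSeries (Fin n) B)) (hI) (f : KK n B) (r) :
    (cdMap I hI f).1 r = kc (r • f) (fun _ => -1) := rfl

lemma cdMap_monomial (I : Ideal (MvPowerSeries (Fin n) B)) (hI) (f : KK n B) (m) :
    (cdMap I hI f).1 (MvPowerSeries.monomial m 1) = kc f (fun i => -1 - m i) := by
  rw [cdMap_apply, k_smul, kι_monomial, kc_ks_mul, one_mul]; rfl

lemma cdMap_ker (I : Ideal (MvPowerSeries (Fin n) B)) (hI) (f : KK n B) :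
    cdMap I hI f = 0 ↔ f ∈ KU (WW n n) := by
  constructor
  · intro h a ha
    by_contra hc
    have hc' : ∀ i, a i < 0 := fun i => by
      by_contra hi
      exact hc ⟨i, i.2, by lia⟩
    apply ha
    have := cdMap_monomial I hI f (Finsupp.equivFunOnFinite.symm (fun i => (-1 - a i).toNat))
    rw [h] at this
    refine Eq.trans ?_ this.symm
    congr 1
    ext i
    have := hc' i
    simp
    lia
  · intro h
    apply cd_zero I hI
    intro m
    rw [cdMap_monomial]
    by_contra hc
    obtain ⟨i, _, hi⟩ := h _ hc
    lia

lemma cdMap_surj (I : Ideal (MvPowerSeries (Fin n) B)) (hI) :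
    Function.Surjective (cdMap (B := B) I hI) := by
  classical
  intro φ
  obtain ⟨t, ht⟩ := φ.2
  let c : (Fin n → ℤ) → B := fun a => if ∀ i, a i ≤ -1 then
    φ.1 (MvPowerSeries.monomial (Finsupp.equivFunOnFinite.symm (fun i => (-1 - a i).toNat)) 1) else 0
  have hc : Function.support c ⊆ Set.Icc (fun _ => -(t : ℤ)) (fun _ => -1) := by
    intro a ha
    rw [Function.mem_support] at ha
    simp only [c] at ha
    split_ifs at ha with h1
    · refine ⟨fun i => ?_, h1⟩
      by_contra hlt
      apply ha
      have hm := ht (MvPowerSeries.monomial (Finsupp.equivFunOnFinite.symm (fun i => (-1 - a i).toNat)) 1) (by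
        rw [hI]
        apply mem_pow_of_coeff t Finset.univ
        intro m hm
        rw [MvPowerSeries.coeff_monomial, if_neg]
        rintro rfl
        have := hm i (Finset.mem_univ i)
        simp at this hlt
        lia) 1
      rwa [smul_eq_mul, mul_one] at hm
    · exact absurd rfl ha
  let f : KK n B := (⟨c, ((Set.finite_Icc _ _).subset hc).isPWO⟩ : HahnSeries (Fin n → ℤ) B)
  refine ⟨f, ?_⟩
  rw [← sub_eq_zero]
  apply cd_zero I hI
  intro m
  change (cdMap I hI f).1 _ - φ.1 _ = 0
  rw [cdMap_monomial, sub_eq_zero]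
  change c _ = _
  simp only [c]
  rw [if_pos (by intro i; lia)]
  congr 2
  ext i
  simp

lemma KU_UU_top (f : KK n B) : f ∈ KU (UU n n) := fun a _ i hi => by
  have := i.2
  lia

lemma quot_equiv {S X T : Type*} [CommRing S] [AddCommGroup X] [Module S X] [AddCommMonoid T]
    [Module S T] (P : Submodule S X) (G : X →ₗ[S] T) (hs : Function.Surjective G)
    (h : ∀ f g, G f = G g ↔ f - g ∈ P) : Nonempty ((X ⧸ P) ≃ₗ[S] T) := by
  choose c hc using hs
  let F : T →ₗ[S] X ⧸ P :=
    { toFun := fun t => Submodule.Quotient.mk (c t)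
      map_add' := fun s t => by
        rw [← Submodule.Quotient.mk_add, Submodule.Quotient.eq, ← h, map_add, hc, hc, hc]
      map_smul' := fun r t => by
        rw [RingHom.id_apply, ← Submodule.Quotient.mk_smul, Submodule.Quotient.eq, ← h, map_smul,
          hc, hc] }
  refine ⟨(LinearEquiv.ofBijective F ⟨fun s t hst => ?_, fun x => ?_⟩).symm⟩
  · have := (Submodule.Quotient.eq P).mp hst
    rw [← h, hc, hc] at this
    exact this
  · obtain ⟨f, rfl⟩ := Submodule.Quotient.mk_surjective _ x
    refine ⟨G f, (Submodule.Quotient.eq P).mpr ?_⟩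
    rw [← h, hc]

noncomputable def cdG (I : Ideal (MvPowerSeries (Fin n) B))
    (hI : I = Ideal.span (Set.range (MvPowerSeries.X : Fin n → MvPowerSeries (Fin n) B))) :
    KU (B := B) (UU n n) →ₗ[MvPowerSeries (Fin n) B]
      ContinuousDual B (MvPowerSeries (Fin n) B) I (MvPowerSeries (Fin n) B) where
  toFun f := cdMap I hI f.1
  map_add' f g := (cdMap I hI).map_add f.1 g.1
  map_smul' r f := (cdMap I hI).map_smul r f.1

lemma cdMap_eq (I : Ideal (MvPowerSeries (Fin n) B)) (hI) (f g : KK n B) :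
    cdMap I hI f = cdMap I hI g ↔ f - g ∈ KU (WW n n) := by
  rw [← cdMap_ker I hI]
  have key : ∀ r, (cdMap I hI (f - g)).1 r = (cdMap I hI f).1 r - (cdMap I hI g).1 r := by
    intro r
    rw [cdMap_apply, smul_sub, kc_sub]
    rfl
  constructor
  · intro h
    apply Subtype.ext
    apply LinearMap.ext
    intro r
    rw [key, h, sub_self]
    rfl
  · intro h
    apply Subtype.ext
    apply LinearMap.ext
    intro r
    rw [← sub_eq_zero, ← key, h]
    rfl

lemma q_top_equiv (I : Ideal (MvPowerSeries (Fin n) B))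
    (hI : I = Ideal.span (Set.range (MvPowerSeries.X : Fin n → MvPowerSeries (Fin n) B))) :
    Nonempty (QQ B (UU n n) (WW n n) ≃ₗ[MvPowerSeries (Fin n) B]
      ContinuousDual B (MvPowerSeries (Fin n) B) I (MvPowerSeries (Fin n) B)) := by
  apply quot_equiv _ (cdG I hI)
  · intro φ
    obtain ⟨f, hf⟩ := cdMap_surj I hI φ
    exact ⟨⟨f, KU_UU_top f⟩, hf⟩
  · intro f g
    exact cdMap_eq I hI f.1 g.1

end PartE
end LCAux
namespace LCAux
section PartF
open CategoryTheory
variable {n : ℕ} {B : Type} [CommRing B]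

lemma final (I : Ideal (MvPowerSeries (Fin n) B))
    (hI : I = Ideal.span (Set.range (MvPowerSeries.X : Fin n → MvPowerSeries (Fin n) B))) :
    Nonempty
      (((localCohomology I n).obj
          (ModuleCat.of (MvPowerSeries (Fin n) B) (MvPowerSeries (Fin n) B))) ≃ₗ[MvPowerSeries (Fin n) B]
        ContinuousDual B (MvPowerSeries (Fin n) B) I (MvPowerSeries (Fin n) B)) := by
  obtain ⟨e0⟩ := q_zero_equiv (n := n) (B := B)
  obtain ⟨e1⟩ := q_top_equiv I hI
  have w : ∀ k, k < n → ModuleCat.ofHom (qf (n := n) B k) ≫ ModuleCat.ofHom (qg (n := n) B k) = 0 := by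
    intro k hk
    apply ModuleCat.hom_ext
    apply LinearMap.ext
    exact qfg k hk
  obtain ⟨α, hα⟩ := exists_class n
    (ModuleCat.of (MvPowerSeries (Fin n) B) (MvPowerSeries (Fin n) B))
    (fun k => ModuleCat.of _ (QQ B (UU n k) (WW n k)))
    (fun k => ModuleCat.of _ (QQ B (UU n (k+1)) (WW n k)))
    (fun k => ModuleCat.ofHom (qf B k)) (fun k => ModuleCat.ofHom (qg B k)) w
    (fun k hk =>
      { exact := by
          rw [ShortComplex.moduleCat_exact_iff]
          intro x hx
          exact q_exact k x hx
        mono_f := (ModuleCat.mono_iff_injective _).mpr (qf_inj k)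
        epi_g := (ModuleCat.epi_iff_surjective _).mpr (qg_surj k) })
    e0.toModuleIso
    (fun N => ∃ t : ℕ, ∀ i : Fin n, ∀ x : N,
      (MvPowerSeries.X i ^ t : MvPowerSeries (Fin n) B) • x = 0)
    (by
      rintro N ⟨t, ht⟩ k hk i y
      exact ext_vanish (MvPowerSeries.X ⟨k, hk⟩ ^ t) (ht ⟨k, hk⟩) (q_bij k hk t) i y)
  obtain ⟨e2⟩ := colim_equiv n I _ _ α
    (by
      intro t
      apply hα
      refine ⟨t, fun i x => ?_⟩
      obtain ⟨r, rfl⟩ := Submodule.Quotient.mk_surjective _ x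
      refine (Submodule.Quotient.mk_eq_zero _).mpr ?_
      refine Ideal.mul_mem_right _ _ (Ideal.pow_mem_pow ?_ t)
      rw [hI]
      exact Ideal.subset_span (Set.mem_range_self i))
    (by
      intro x
      obtain ⟨f, rfl⟩ := Submodule.Quotient.mk_surjective _ x
      obtain ⟨t, ht⟩ := k_torsion f.1
      refine ⟨t, fun r hr => ?_⟩
      rw [hI] at hr
      exact (QQ_mk_zero (r • f)).mpr (ht r hr))
  exact ⟨e2.trans e1⟩

end PartF
end LCAux

/-- **Top local cohomology of a power series ring as a continuous dual.**
For `R = A[[x₁,…,xₙ]]` and `I = (x₁,…,xₙ)` there is an `R`-module isomorphism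
`Hⁿ_I(R) ≅ Hom_A^cts(R, A)`. -/
theorem stmt10 (A : Type) [CommRing A] [IsNoetherianRing A] (n : ℕ)
    (I : Ideal (MvPowerSeries (Fin n) A))
    (hI : I = Ideal.span (Set.range (MvPowerSeries.X : Fin n → MvPowerSeries (Fin n) A))) :
    Nonempty
      (((localCohomology I n).obj
          (ModuleCat.of (MvPowerSeries (Fin n) A) (MvPowerSeries (Fin n) A))) ≃ₗ[MvPowerSeries (Fin n) A]
        ContinuousDual A (MvPowerSeries (Fin n) A) I (MvPowerSeries (Fin n) A)) := by
  exact LCAux.final I hI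
end

section
/- Let A be a commutative Noetherian ring, let R = A[[x_1, ..., x_n]] be the power series ring over A, and let I = (x_1, ..., x_n) ⊆ R. Then H^i_I(R) = 0 for every i ≠ n. -/
open CategoryTheory Limits Abelian

noncomputable abbrev sesQ {R : Type} [CommRing R] (J K : Ideal R) (f : R) (hJK : J ≤ K) (hf : f ∈ K) :
    ShortComplex (ModuleCat.{0} R) :=
  ShortComplex.mk (X₁ := ModuleCat.of R (R ⧸ J)) (X₂ := ModuleCat.of R (R ⧸ J)) 
    (X₃ := ModuleCat.of R (R ⧸ K)) (f • 𝟙 _) 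
    (ModuleCat.ofHom (Submodule.mapQ J K LinearMap.id hJK)) (by
      ext
      simp [Ideal.Quotient.eq_zero_iff_mem, Algebra.smul_def, hf])

lemma sesQ_shortExact {R : Type} [CommRing R] (J K : Ideal R) (f : R) (hJK : J ≤ K) (hf : f ∈ K)
    (hK : K ≤ J ⊔ Ideal.span {f}) (hreg : ∀ g, f * g ∈ J → g ∈ J) :
    (sesQ J K f hJK hf).ShortExact := by
  refine ShortComplex.ShortExact.mk' ?_ ?_ ?_
  · rw [ShortComplex.moduleCat_exact_iff]
    intro (x : R ⧸ J) hx
    obtain ⟨x, rfl⟩ := Ideal.Quotient.mk_surjective x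
    change Ideal.Quotient.mk K x = 0 at hx
    rw [Ideal.Quotient.eq_zero_iff_mem] at hx
    obtain ⟨y, hy, z, hz, rfl⟩ := Submodule.mem_sup.1 (hK hx)
    obtain ⟨w, rfl⟩ := Ideal.mem_span_singleton'.1 hz
    refine ⟨Ideal.Quotient.mk J w, ?_⟩
    change Ideal.Quotient.mk J (f * w) = Ideal.Quotient.mk J (y + w * f)
    rw [Ideal.Quotient.eq]
    convert J.neg_mem hy using 1
    ring
  · rw [ModuleCat.mono_iff_injective, injective_iff_map_eq_zero]
    intro (x : R ⧸ J) hx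
    obtain ⟨x, rfl⟩ := Ideal.Quotient.mk_surjective x
    change Ideal.Quotient.mk J (f * x) = 0 at hx
    rw [Ideal.Quotient.eq_zero_iff_mem] at hx
    exact Ideal.Quotient.eq_zero_iff_mem.2 (hreg _ hx)
  · rw [ModuleCat.epi_iff_surjective]
    intro (x : R ⧸ K)
    obtain ⟨x, rfl⟩ := Ideal.Quotient.mk_surjective x
    exact ⟨Ideal.Quotient.mk J x, rfl⟩

section
variable {R : Type} [CommRing R] {ι : Type} [DecidableEq ι] (f : ι → R)

def JJ (S : Finset ι) : Ideal R := Ideal.span (f '' S)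

variable (hreg : ∀ (S : Finset ι) (a : ι), a ∉ S → ∀ g, f a * g ∈ JJ f S → g ∈ JJ f S)

include hreg
lemma exists_ses (S : Finset ι) (a : ι) (ha : a ∉ S) :
    ∃ (h1 : JJ f S ≤ JJ f (insert a S)) (h2 : f a ∈ JJ f (insert a S)),
      (sesQ (JJ f S) (JJ f (insert a S)) (f a) h1 h2).ShortExact := by
  refine ⟨Ideal.span_mono (Set.image_mono (by simp)), Ideal.subset_span ⟨a, by simp, rfl⟩,
    sesQ_shortExact _ _ _ _ _ ?_ (hreg S a ha)⟩
  rw [JJ, JJ, Finset.coe_insert, Set.image_insert_eq, Ideal.span_insert, sup_comm]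

lemma pd_JJ (S : Finset ι) :
    HasProjectiveDimensionLT (ModuleCat.of R (R ⧸ JJ f S)) (S.card + 1) := by
  induction S using Finset.induction_on with
  | empty =>
    have e : (R ⧸ JJ f ∅) ≃ₗ[R] R := Submodule.quotEquivOfEqBot _ (by simp [JJ])
    have : Module.Projective R (R ⧸ JJ f ∅) := Module.Projective.of_equiv e.symm
    have : Projective (ModuleCat.of R (R ⧸ JJ f ∅)) := inferInstance
    simp only [Finset.card_empty, zero_add]
    infer_instance
  | insert a S ha ih =>
    obtain ⟨h1, h2, h⟩ := exists_ses f hreg S a ha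
    rw [Finset.card_insert_of_notMem ha]
    exact h.hasProjectiveDimensionLT_X₃ _ ih (@hasProjectiveDimensionLT_of_ge _ _ _ _ (S.card + 1) _ (by omega) ih)

omit hreg in
lemma ext_low_step (T : ShortComplex (ModuleCat.{0} R)) (hT : T.ShortExact) (N : ModuleCat.{0} R)
    (j : ℕ) (x : Abelian.Ext.{0} N T.X₁ j) (hx : x.comp (Ext.mk₀ T.f) (add_zero _) = 0)
    (ih : ∀ k, k + 1 = j → ∀ y : Abelian.Ext.{0} N T.X₃ k, y = 0) : x = 0 := by
  cases j with
  | zero =>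
    have := hT.mono_f
    apply Ext.postcomp_mk₀_injective_of_mono N T.f
    rw [map_zero]
    exact hx
  | succ j =>
    obtain ⟨y, rfl⟩ := Ext.covariant_sequence_exact₁ N hT x hx rfl
    rw [ih _ rfl y, Ext.zero_comp]

lemma ext_low [Fintype ι] (N : ModuleCat.{0} R) (hN : ∀ a, f a • 𝟙 N = 0) (j : ℕ) : ∀ (S : Finset ι),
    j + S.card < Fintype.card ι → ∀ x : Abelian.Ext.{0} N (ModuleCat.of R (R ⧸ JJ f S)) j, x = 0 := by
  induction j using Nat.strong_induction_on with
  | _ j ih =>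
    intro S hS x
    obtain ⟨a, ha⟩ : ∃ a, a ∉ S := by
      by_contra! hh
      rw [Finset.eq_univ_iff_forall.2 hh, Finset.card_univ] at hS
      omega
    obtain ⟨h1, h2, h⟩ := exists_ses f hreg S a ha
    refine ext_low_step _ h N j x ?_ fun k hk y => 
      ih k (by omega) (insert a S) (by rw [Finset.card_insert_of_notMem ha]; omega) y
    have := Ext.smul_eq_comp_mk₀ x (f a)
    refine this.symm.trans ?_
    rw [← Ext.mk₀_id_comp x, ← Ext.smul_comp, ← Ext.mk₀_smul, hN]
    simp

lemma ext_all [Fintype ι] (j : ℕ) (hj : j ≠ Fintype.card ι) 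
    (x : Abelian.Ext.{0} (ModuleCat.of R (R ⧸ JJ f Finset.univ)) (ModuleCat.of R R) j) : x = 0 := by
  rcases lt_or_gt_of_ne hj with h | h
  · have e : (R ⧸ JJ f ∅) ≃ₗ[R] R := Submodule.quotEquivOfEqBot _ (by simp [JJ])
    have := ext_low f hreg (ModuleCat.of R (R ⧸ JJ f Finset.univ)) (fun a => by
      ext
      have : f a ∈ JJ f Finset.univ := Ideal.subset_span ⟨a, by simp, rfl⟩
      simp [Ideal.Quotient.eq_zero_iff_mem, Algebra.smul_def, this]) j ∅ (by simpa using h) 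
        (x.comp (Ext.mk₀ e.toModuleIso.inv) (add_zero _))
    rw [← Ext.comp_mk₀_id x, ← e.toModuleIso.inv_hom_id, ← Ext.mk₀_comp_mk₀, 
      ← Ext.comp_assoc_of_third_deg_zero, this, Ext.zero_comp]
  · have := pd_JJ f hreg Finset.univ
    exact x.eq_zero_of_hasProjectiveDimensionLT ((Finset.univ : Finset ι).card + 1) (by rw [Finset.card_univ]; omega)
end

lemma isZero_Ext_of {R : Type} [CommRing R] (X Y : ModuleCat.{0} R) (i : ℕ)
    (h : ∀ x : Abelian.Ext.{0} X Y i, x = 0) :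
    IsZero (((Ext R (ModuleCat.{0} R) i).obj (.op X)).obj Y) := by
  let P := projectiveResolution X
  refine IsZero.of_iso ?_ (P.isoExt i Y)
  rw [← HomologicalComplex.exactAt_iff_isZero_homology]
  cases i with
  | zero =>
    rw [HomologicalComplex.exactAt_iff' _ 0 0 1 (by simp) (by simp),
      ShortComplex.moduleCat_exact_iff]
    intro (x : P.complex.X 0 ⟶ Y) hx
    replace hx : P.complex.d 1 0 ≫ x = 0 := hx
    obtain ⟨y, hy⟩ : ∃ y : X ⟶ Y, P.π.f 0 ≫ y = x := 
      ⟨P.exact₀.desc x hx, P.exact₀.g_desc x hx⟩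
    have hy0 : y = 0 := by
      apply (Ext.mk₀_bijective X Y).1
      rw [h (Ext.mk₀ y), Ext.mk₀_zero]
    refine ⟨0, ?_⟩
    rw [map_zero, ← hy, hy0]
    exact (comp_zero (f := P.π.f 0) (Z := Y)).symm
  | succ i =>
    rw [HomologicalComplex.exactAt_iff' _ i (i+1) (i+2) (by simp) (by simp),
      ShortComplex.moduleCat_exact_iff]
    intro (x : P.complex.X (i+1) ⟶ Y) hx
    replace hx : P.complex.d (i+2) (i+1) ≫ x = 0 := hx
    exact (P.extMk_eq_zero_iff x (i+2) rfl hx i rfl).1 (h _)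

lemma ext_map_zero {R : Type} [CommRing R] (i : ℕ) (M : ModuleCat.{0} R) {X Y Z : ModuleCat.{0} R}
    (r : X ⟶ Z) (p : X ⟶ Y) (q : Y ⟶ Z) (h : r = p ≫ q)
    (hz : IsZero (((Ext R (ModuleCat.{0} R) i).obj (.op Y)).obj M)) :
    ((Ext R (ModuleCat.{0} R) i).map r.op).app M = 0 := by
  rw [h, op_comp, Functor.map_comp, NatTrans.comp_app, hz.eq_of_tgt
      (((Ext R (ModuleCat.{0} R) i).map q.op).app M) 0, zero_comp]

lemma isZero_lc {R : Type} [CommRing R] (I : Ideal R) (i : ℕ) (M : ModuleCat.{0} R)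
    (h : ∀ t : ℕ, ∃ (J : Ideal R) (s : ℕ), I ^ s ≤ J ∧ J ≤ I ^ t ∧ t ≤ s ∧
      IsZero (((Ext R (ModuleCat.{0} R) i).obj (.op (ModuleCat.of R (R ⧸ J)))).obj M)) :
    IsZero ((localCohomology I i).obj M) := by
  let F := localCohomology.diagram (localCohomology.idealPowersDiagram I) i
  have : HasColimit F := localCohomology.hasColimitDiagram _ _
  change IsZero ((colimit F).obj M)
  have hc := isColimitOfPreserves ((evaluation (ModuleCat.{0} R) (ModuleCat.{0} R)).obj M) 
    (colimit.isColimit F)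
  rw [IsZero.iff_id_eq_zero]
  refine hc.hom_ext fun t => ?_
  obtain ⟨J, s, h1, h2, hts, hz⟩ := h t.unop.unop
  let φ : t ⟶ .op (.op s) := (homOfLE hts).op.op
  have hw := Cocone.w (((evaluation (ModuleCat.{0} R) (ModuleCat.{0} R)).obj M).mapCocone
    (colimit.cocone F)) φ
  have h0 : (F ⋙ (evaluation (ModuleCat.{0} R) (ModuleCat.{0} R)).obj M).map φ = 0 := by
    let p : ModuleCat.of R (R ⧸ I ^ s) ⟶ ModuleCat.of R (R ⧸ J) := 
      ModuleCat.ofHom (Submodule.mapQ _ _ LinearMap.id h1)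
    let q : ModuleCat.of R (R ⧸ J) ⟶ ModuleCat.of R (R ⧸ I ^ t.unop.unop) := 
      ModuleCat.ofHom (Submodule.mapQ _ _ LinearMap.id h2)
    have hpq : (localCohomology.ringModIdeals (localCohomology.idealPowersDiagram I)).map φ.unop
        = p ≫ q := by
      refine ModuleCat.hom_ext (LinearMap.ext fun (x : R ⧸ I ^ s) => ?_)
      obtain ⟨x, rfl⟩ := Ideal.Quotient.mk_surjective x
      rfl
    change ((Ext R (ModuleCat.{0} R) i).map ((localCohomology.ringModIdeals
      (localCohomology.idealPowersDiagram I)).map φ.unop).op).app M = 0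
    exact ext_map_zero i M _ p q hpq hz
  rw [← hw, h0, zero_comp, zero_comp, comp_zero]

open MvPowerSeries in
lemma mem_JJ_iff {A σ : Type} [CommRing A] [DecidableEq σ] (t : ℕ) (S : Finset σ) 
    (g : MvPowerSeries σ A) : g ∈ JJ (fun i => (X i : MvPowerSeries σ A) ^ t) S ↔
      ∀ m : σ →₀ ℕ, (∀ i ∈ S, m i < t) → coeff m g = 0 := by
  constructor
  · intro hg
    induction hg using Submodule.span_induction with
    | mem x h =>
      intro m hm
      obtain ⟨i, hi, rfl⟩ := h
      have := hm i hi
      simp only [coeff_X_pow]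
      rw [if_neg]
      rintro rfl
      simp at this
    | zero => simp
    | add x y _ _ hx hy =>
      intro m hm
      simp [hx m hm, hy m hm]
    | smul a x hx h =>
      intro m hm
      rw [smul_eq_mul, coeff_mul]
      refine Finset.sum_eq_zero fun p hp => ?_
      rw [h p.2 fun i hi => ?_, mul_zero]
      have h1 := hm i hi
      rw [← Finset.HasAntidiagonal.mem_antidiagonal.1 hp] at h1
      simp only [Finsupp.coe_add, Pi.add_apply] at h1
      omega
  · induction S using Finset.induction_on generalizing g with
    | empty =>
      intro h
      have : g = 0 := by ext m; exact h m (by simp)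
      rw [this]; exact zero_mem _
    | insert a S ha ih =>
      intro h
      let g1 : MvPowerSeries σ A := fun m => if m a < t then coeff m g else 0
      let g2 : MvPowerSeries σ A := fun m => coeff (m + Finsupp.single a t) g
      have : g = g1 + X a ^ t * g2 := by
        ext m
        rw [map_add, X_pow_eq, coeff_monomial_mul]
        change coeff m g = (if m a < t then coeff m g else 0) + _
        by_cases hh : m a < t
        · rw [if_pos hh, if_neg, add_zero]
          intro h'
          have := h' a
          simp at this
          omega
        · have h' : Finsupp.single a t ≤ m := by
            rw [Finsupp.single_le_iff]; omega
          rw [if_neg hh, if_pos h', zero_add, one_mul]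
          change _ = coeff (m - Finsupp.single a t + Finsupp.single a t) g
          rw [tsub_add_cancel_of_le h']
      rw [this]
      refine add_mem ?_ ?_
      · refine Ideal.span_mono (Set.image_mono (by simp)) (ih g1 fun m hm => ?_)
        change (if m a < t then coeff m g else 0) = 0
        split_ifs with hh
        · exact h m (by simpa using ⟨hh, hm⟩)
        · rfl
      · exact Ideal.mul_mem_right _ _ (Ideal.subset_span ⟨a, by simp, rfl⟩)

open MvPowerSeries in
lemma reg_JJ {A σ : Type} [CommRing A] [DecidableEq σ] (t : ℕ) (S : Finset σ) (a : σ) (ha : a ∉ S)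
    (g : MvPowerSeries σ A) (hg : X a ^ t * g ∈ JJ (fun i => (X i : MvPowerSeries σ A) ^ t) S) :
    g ∈ JJ (fun i => (X i : MvPowerSeries σ A) ^ t) S := by
  rw [mem_JJ_iff] at hg ⊢
  intro m hm
  have := hg (Finsupp.single a t + m) fun i hi => by
    have : a ≠ i := fun h => ha (h ▸ hi)
    simpa [Finsupp.single_apply, this] using hm i hi
  rwa [X_pow_eq, coeff_add_monomial_mul, one_mul] at this

/-- **Vanishing of local cohomology of a power series ring.**
For `R = A[[x₁,…,xₙ]]` over a Noetherian commutative ring `A` and `I = (x₁,…,xₙ)`,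
the local cohomology `Hⁱ_I(R)` vanishes for every `i ≠ n`. -/
theorem stmt11 (A : Type) [CommRing A] [IsNoetherianRing A] (n : ℕ)
    (I : Ideal (MvPowerSeries (Fin n) A))
    (hI : I = Ideal.span (Set.range (MvPowerSeries.X : Fin n → MvPowerSeries (Fin n) A))) :
    ∀ i : ℕ, i ≠ n →
      CategoryTheory.Limits.IsZero
        ((localCohomology I i).obj
          (ModuleCat.of (MvPowerSeries (Fin n) A) (MvPowerSeries (Fin n) A))) := by
  intro i hi
  refine isZero_lc I i _ fun t => ?_
  let f : Fin n → MvPowerSeries (Fin n) A := fun i => MvPowerSeries.X i ^ t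
  obtain ⟨k, hk⟩ : ∃ k, I ^ k ≤ JJ f Finset.univ := by
    apply Ideal.exists_pow_le_of_le_radical_of_fg
    · rw [hI, Ideal.span_le]
      rintro _ ⟨j, rfl⟩
      exact ⟨t, Ideal.subset_span ⟨j, by simp, rfl⟩⟩
    · rw [hI]
      exact Submodule.fg_span (Set.finite_range _)
  refine ⟨JJ f Finset.univ, max k t, (Ideal.pow_le_pow_right (le_max_left _ _)).trans hk, ?_,
    le_max_right _ _, isZero_Ext_of _ _ _ (ext_all f (reg_JJ t) i (by simpa using hi))⟩
  rw [JJ, Ideal.span_le]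
  rintro _ ⟨j, -, rfl⟩
  exact Ideal.pow_mem_pow (hI ▸ Ideal.subset_span ⟨j, rfl⟩) t
end
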